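/- arXiv:1612.03372 — 3 statements merged into one kernel-verified Lean document; each statement's English description precedes it below -/
import Mathlib

section
/- Let n ≥ 7 be an integer and suppose w_1, w_2, w_3 ∈ ℂ are the roots (with multiplicity) of 4X³ − 2X² − 5X − 2, i.e. 4X³ − 2X² − 5X − 2 = 4(X − w_1)(X − w_2)(X − w_3). Then τ(GP(n,3)) = n · ∏_{s=1}^{3} (T_n(w_s) − 1)/(w_s − 1), as an equality in ℂ with τ(GP(n,3)) cast to ℂ. -/
open Polynomial

/-- The defining relation for the generalized Petersen graph `GP(n,k)`:
`u_i ~ u_{i+1}`, `u_i ~ v_i`, `v_i ~ v_{i+k}` (indices mod `n`);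
`Sum.inl i` is the outer vertex `u_i`, `Sum.inr i` the inner vertex `v_i`. -/
def gpRel (n k : ℕ) : (ZMod n ⊕ ZMod n) → (ZMod n ⊕ ZMod n) → Prop
  | Sum.inl i, Sum.inl j => j = i + 1
  | Sum.inl i, Sum.inr j => j = i
  | Sum.inr _, Sum.inl _ => False
  | Sum.inr i, Sum.inr j => j = i + (k : ZMod n)

instance (n k : ℕ) : DecidableRel (gpRel n k) := fun a b =>
  match a, b with
  | Sum.inl i, Sum.inl j => inferInstanceAs (Decidable (j = i + 1))
  | Sum.inl i, Sum.inr j => inferInstanceAs (Decidable (j = i))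
  | Sum.inr _, Sum.inl _ => inferInstanceAs (Decidable False)
  | Sum.inr i, Sum.inr j => inferInstanceAs (Decidable (j = i + (k : ZMod n)))

/-- The generalized Petersen graph `GP(n,k)`. -/
def genPetersen (n k : ℕ) : SimpleGraph (ZMod n ⊕ ZMod n) :=
  SimpleGraph.fromRel (gpRel n k)

instance (n k : ℕ) : DecidableRel (genPetersen n k).Adj := fun a b =>
  inferInstanceAs (Decidable (a ≠ b ∧ (gpRel n k a b ∨ gpRel n k b a)))

/-- The number of spanning trees of a graph `G`: the number of subgraphs that
contain all vertices and are trees. -/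
noncomputable def numSpanningTrees {V : Type*} (G : SimpleGraph V) : ℕ :=
  Nat.card {H : G.Subgraph // H.IsSpanning ∧ H.coe.IsTree}

namespace MTT
variable {V : Type*} 

def treeEquiv (G : SimpleGraph V) :
    {H : G.Subgraph // H.IsSpanning ∧ H.coe.IsTree} ≃ {T : SimpleGraph V // T ≤ G ∧ T.IsTree} where
  toFun H := ⟨H.1.spanningCoe, H.1.spanningCoe_le,
    (SimpleGraph.Iso.isTree_iff (H.1.spanningCoeEquivCoeOfSpanning H.2.1)).2 H.2.2⟩
  invFun T := ⟨SimpleGraph.toSubgraph T.1 T.2.1, SimpleGraph.toSubgraph.isSpanning T.1 T.2.1,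
    (SimpleGraph.Iso.isTree_iff ((SimpleGraph.toSubgraph T.1 T.2.1).spanningCoeEquivCoeOfSpanning
      (SimpleGraph.toSubgraph.isSpanning T.1 T.2.1))).1 T.2.2⟩
  left_inv H := by
    apply Subtype.ext
    apply SimpleGraph.Subgraph.ext
    · simp [SimpleGraph.toSubgraph, SimpleGraph.Subgraph.isSpanning_iff.1 H.2.1]
    · rfl
  right_inv T := by
    apply Subtype.ext
    rfl

structure IsPar (G : SimpleGraph V) (r : V) (f : V → V) : Prop where
  root : f r = r
  adj : ∀ i, i ≠ r → G.Adj i (f i)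

def Good (r : V) (f : V → V) : Prop := ∀ i, ∃ k, f^[k] i = r

def TG (r : V) (f : V → V) : SimpleGraph V := SimpleGraph.fromRel (fun a b => a ≠ r ∧ f a = b)

lemma TG_adj {G : SimpleGraph V} {r : V} {f : V → V} (h : IsPar G r f) (a b : V) :
    (TG r f).Adj a b ↔ (a ≠ r ∧ f a = b) ∨ (b ≠ r ∧ f b = a) := by
  simp only [TG, SimpleGraph.fromRel_adj]
  constructor
  · exact fun h => h.2
  · intro h'
    refine ⟨?_, h'⟩
    rintro rfl
    rcases h' with ⟨h1, h2⟩ | ⟨h1, h2⟩ <;>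
    · have := h.adj a h1
      rw [h2] at this
      exact this.ne rfl

lemma TG_le {G : SimpleGraph V} {r : V} {f : V → V} (h : IsPar G r f) : TG r f ≤ G := by
  intro a b hab
  rcases (TG_adj h a b).1 hab with ⟨h1, rfl⟩ | ⟨h1, rfl⟩
  · exact h.adj a h1
  · exact (h.adj b h1).symm

lemma TG_conn {G : SimpleGraph V} {r : V} {f : V → V} (h : IsPar G r f) (hg : Good r f) :
    (TG r f).Connected := by
  have key : ∀ k i, f^[k] i = r → (TG r f).Reachable i r := by
    intro k
    induction k with
    | zero => intro i hi; simp at hi; subst hi; exact SimpleGraph.Reachable.refl _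
    | succ k ih =>
      intro i hi
      by_cases hir : i = r
      · subst hir; exact SimpleGraph.Reachable.refl _
      · have h1 : (TG r f).Adj i (f i) := (TG_adj h _ _).2 (Or.inl ⟨hir, rfl⟩)
        exact h1.reachable.trans (ih _ (by simpa using hi))
  have : Nonempty V := ⟨r⟩
  refine ⟨fun a b => ?_⟩
  obtain ⟨k, hk⟩ := hg a
  obtain ⟨l, hl⟩ := hg b
  exact (key k a hk).trans (key l b hl).symm

lemma TG_tree [Fintype V] {G : SimpleGraph V} {r : V} {f : V → V} (h : IsPar G r f)
    (hg : Good r f) : (TG r f).IsTree := by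
  classical
  rw [SimpleGraph.isTree_iff_connected_and_card]
  refine ⟨TG_conn h hg, ?_⟩
  have h1 := (TG_conn h hg).card_vert_le_card_edgeSet_add_one
  have h2 : (TG r f).edgeSet ⊆ ((Finset.univ.erase r).image (fun i => s(i, f i)) : Finset (Sym2 V)) := by
    intro e
    induction e using Sym2.ind with
    | _ a b =>
      intro hab
      rw [SimpleGraph.mem_edgeSet, TG_adj h] at hab
      simp only [Finset.coe_image, Set.mem_image, Finset.coe_erase]
      rcases hab with ⟨h1, rfl⟩ | ⟨h1, rfl⟩
      · exact ⟨a, by simpa using h1, rfl⟩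
      · exact ⟨b, by simpa using h1, Sym2.eq_swap⟩
  have h3 := Set.ncard_le_ncard h2 (Finset.finite_toSet _)
  rw [Set.ncard_coe_finset] at h3
  have h4 := Finset.card_image_le (s := Finset.univ.erase r) (f := fun i => s(i, f i))
  rw [Finset.card_erase_of_mem (Finset.mem_univ r), Finset.card_univ] at h4
  have h5 : 0 < Fintype.card V := Fintype.card_pos_iff.2 ⟨r⟩
  rw [← Nat.card_eq_fintype_card] at h4 h5
  rw [← Nat.card_coe_set_eq] at h3
  omega

lemma TG_inj {G : SimpleGraph V} {r : V} {f g : V → V} (hf : IsPar G r f) (hg : IsPar G r g)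
    (hgg : Good r g) (h : TG r f = TG r g) : f = g := by
  by_contra hne
  obtain ⟨i, hi⟩ := Function.ne_iff.1 hne
  have hadj : ∀ a, a ≠ r → f a ≠ g a → g a ≠ r ∧ f (g a) = a := by
    intro a har hfa
    have : (TG r g).Adj a (g a) := (TG_adj hg _ _).2 (Or.inl ⟨har, rfl⟩)
    rw [← h, TG_adj hf] at this
    rcases this with h1 | h1
    · exact absurd h1.2 hfa
    · exact h1
  have h0 : ∀ a, a ≠ r → f a ≠ g a → f (g a) ≠ g (g a) := by
    intro a har hfa heq
    obtain ⟨h1, h2⟩ := hadj a har hfa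
    rw [h2] at heq
    -- two-cycle of g
    obtain ⟨k, hk⟩ := hgg a
    have : ∀ k, g^[k] a = a ∨ g^[k] a = g a := by
      intro k
      induction k with
      | zero => left; rfl
      | succ k ih =>
        rw [Function.iterate_succ_apply']
        rcases ih with ih | ih <;> rw [ih]
        · right; rfl
        · left; exact heq.symm
    rcases this k with h' | h' <;> rw [h'] at hk
    · exact har hk
    · exact h1 hk
  have hir : i ≠ r := by
    rintro rfl
    exact hi (by rw [hf.root, hg.root])
  obtain ⟨k, hk⟩ := hgg i
  have : ∀ k, g^[k] i ≠ r ∧ f (g^[k] i) ≠ g (g^[k] i) := by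
    intro k
    induction k with
    | zero => exact ⟨hir, hi⟩
    | succ k ih =>
      rw [Function.iterate_succ_apply']
      exact ⟨(hadj _ ih.1 ih.2).1, h0 _ ih.1 ih.2⟩
  exact (this k).1 hk

lemma TG_surj {G : SimpleGraph V} (r : V) (T : SimpleGraph V) (hT : T.IsTree) (hTG : T ≤ G) :
    ∃ f, IsPar G r f ∧ Good r f ∧ TG r f = T := by
  classical
  have hc := hT.connected
  have hex : ∀ i, i ≠ r → ∃ j, T.Adj i j ∧ T.dist j r < T.dist i r := by
    intro i hi
    obtain ⟨p, hp⟩ := hc.exists_walk_length_eq_dist i r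
    cases p with
    | nil => exact absurd rfl hi
    | cons hadj q =>
      refine ⟨_, hadj, ?_⟩
      rw [← hp, SimpleGraph.Walk.length_cons]
      exact Nat.lt_succ_of_le (SimpleGraph.dist_le q)
  choose! g hg1 hg2 using hex
  let f : V → V := fun i => if i = r then r else g i
  have hfr : f r = r := if_pos rfl
  have hfi : ∀ i, i ≠ r → f i = g i := fun i hi => if_neg hi
  have hpT : IsPar T r f := ⟨hfr, fun i hi => by rw [hfi i hi]; exact hg1 i hi⟩
  have hp : IsPar G r f := ⟨hfr, fun i hi => hTG (hpT.adj i hi)⟩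
  have hgood : Good r f := by
    have : ∀ m i, T.dist i r ≤ m → ∃ k, f^[k] i = r := by
      intro m
      induction m with
      | zero =>
        intro i hi
        exact ⟨0, (hc.dist_eq_zero_iff).1 (Nat.le_zero.1 hi)⟩
      | succ m ih =>
        intro i hi
        by_cases hir : i = r
        · exact ⟨0, hir⟩
        · obtain ⟨k, hk⟩ := ih (f i) (by
            rw [hfi i hir]
            have := hg2 i hir
            omega)
          exact ⟨k + 1, by simpa using hk⟩
    exact fun i => this _ i le_rfl
  refine ⟨f, hp, hgood, ?_⟩
  exact le_antisymm (TG_le hpT)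
    ((SimpleGraph.isTree_iff_minimal_connected.1 hT).2 (TG_conn hp hgood) (TG_le hpT))

lemma card_trees [Fintype V] (G : SimpleGraph V) (r : V) :
    numSpanningTrees G = Nat.card {f : V → V // IsPar G r f ∧ Good r f} := by
  rw [numSpanningTrees, Nat.card_congr (treeEquiv G)]
  symm
  refine Nat.card_congr (Equiv.ofBijective
    (fun f => ⟨TG r f.1, TG_le f.2.1, TG_tree f.2.1 f.2.2⟩) ⟨?_, ?_⟩)
  · intro f g hfg
    exact Subtype.ext (TG_inj f.2.1 g.2.1 g.2.2 (congrArg Subtype.val hfg))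
  · rintro ⟨T, hTG, hT⟩
    obtain ⟨f, h1, h2, h3⟩ := TG_surj (G := G) r T hT hTG
    exact ⟨⟨f, h1, h2⟩, Subtype.ext h3⟩

variable [Fintype V] [DecidableEq V]

def rowmat (r : V) (f : V → V) : Matrix V V ℂ :=
  Matrix.of fun i => (Pi.single i 1 - if i = r then 0 else Pi.single (f i) 1)

lemma rowmat_apply (r : V) (f : V → V) (i j : V) :
    rowmat r f i j = (if i = j then 1 else 0) - if i = r then 0 else if f i = j then 1 else 0 := by
  simp only [rowmat, Matrix.of_apply, Pi.sub_apply, Pi.single_apply]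
  split_ifs <;> simp_all

lemma det_good {r : V} {f : V → V} (hg : Good r f) :
    (rowmat r f).det = 1 := by
  classical
  let d : V → ℕ := fun i => Nat.find (hg i)
  have hd : ∀ i, i ≠ r → d (f i) < d i := by
    intro i hi
    have h1 : f^[d i] i = r := Nat.find_spec (hg i)
    rcases hdi : d i with _ | k
    · rw [hdi] at h1; exact absurd h1 hi
    · rw [hdi] at h1
      exact Nat.lt_succ_of_le (Nat.find_min' (hg (f i)) (by simpa using h1))
  have hb : (rowmat r f).BlockTriangular (fun i => OrderDual.toDual (d i)) := by
    intro i j hij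
    have hij' : d i < d j := hij
    rw [rowmat_apply]
    have h1 : i ≠ j := by rintro rfl; exact lt_irrefl _ hij'
    rw [if_neg h1]
    by_cases hir : i = r
    · simp [hir]
    · have h2 : f i ≠ j := by
        rintro rfl
        exact absurd (hd i hir) (by omega)
      simp [hir, h2]
  rw [hb.det]
  apply Finset.prod_eq_one
  intro a _
  have : (rowmat r f).toSquareBlock (fun i => OrderDual.toDual (d i)) a = 1 := by
    ext ⟨i, hi⟩ ⟨j, hj⟩
    rw [Matrix.toSquareBlock_def, Matrix.of_apply, rowmat_apply, Matrix.one_apply]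
    have hij : d i = d j := OrderDual.toDual.injective (hi.trans hj.symm)
    by_cases hir : i = r
    · simp [hir, Subtype.ext_iff]
    · have h2 : f i ≠ j := by
        rintro rfl
        exact absurd (hd i hir) (by omega)
      simp [hir, h2, Subtype.ext_iff]
  rw [this, Matrix.det_one]

lemma det_bad {r : V} {f : V → V} (hg : ¬ Good r f) : (rowmat r f).det = 0 := by
  classical
  rw [← Matrix.exists_mulVec_eq_zero_iff]
  refine ⟨fun i => if ∃ k, f^[k] i = r then 0 else 1, ?_, ?_⟩
  · intro h
    apply hg
    intro i
    by_contra hi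
    have := congrFun h i
    simp [hi] at this
  · ext i
    simp only [Matrix.mulVec, dotProduct, rowmat_apply]
    by_cases hir : i = r
    · subst hir
      have : ∃ k, f^[k] i = i := ⟨0, rfl⟩
      simp only [if_true, sub_zero, ite_mul, one_mul, zero_mul, Finset.sum_ite_eq, Finset.mem_univ, if_pos this]
      rfl
    · have : (∃ k, f^[k] (f i) = r) ↔ ∃ k, f^[k] i = r := by
        constructor
        · rintro ⟨k, hk⟩; exact ⟨k + 1, by simpa using hk⟩
        · rintro ⟨k, hk⟩
          rcases k with _ | k
          · exact absurd hk hir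
          · exact ⟨k, by simpa using hk⟩
      simp only [hir, if_false, sub_mul, ite_mul, one_mul, zero_mul, Finset.sum_sub_distrib,
        Finset.sum_ite_eq, Finset.mem_univ, if_true, this, sub_self]
      rfl

theorem adjugate_eq (G : SimpleGraph V) [DecidableRel G.Adj] (r : V) :
    (G.lapMatrix ℂ).adjugate r r = (numSpanningTrees G : ℂ) := by
  classical
  rw [Matrix.adjugate_apply]
  let A : V → Finset V := fun i => if i = r then {r} else G.neighborFinset i
  let g : V → V → (V → ℂ) := fun i j => Pi.single i 1 - if i = r then 0 else Pi.single j 1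
  have hrow : (G.lapMatrix ℂ).updateRow r (Pi.single r 1) = fun i => ∑ j ∈ A i, g i j := by
    ext i k
    by_cases hir : i = r
    · subst hir
      simp [A, g]
    · rw [Matrix.updateRow_ne hir]
      simp only [A, g, if_neg hir, SimpleGraph.lapMatrix, SimpleGraph.degMatrix, Matrix.sub_apply,
        Matrix.diagonal_apply, SimpleGraph.adjMatrix_apply, Finset.sum_apply, Pi.sub_apply,
        Finset.sum_sub_distrib, Pi.single_apply]
      simp [eq_comm]
  rw [hrow]
  have h1 := (Matrix.detRowAlternating (n := V) (R := ℂ)).toMultilinearMap.map_sum_finset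
    (fun i j => g i j) A
  have h2 : Matrix.det (fun i => ∑ j ∈ A i, g i j) =
      ∑ f ∈ Fintype.piFinset A, (rowmat r f).det := h1
  have hmem : ∀ f, f ∈ Fintype.piFinset A ↔ IsPar G r f := by
    intro f
    simp only [Fintype.mem_piFinset, A]
    constructor
    · intro h
      exact ⟨by simpa using h r, fun i hi => by simpa [hi] using h i⟩
    · intro h i
      by_cases hir : i = r
      · subst hir; simpa using h.root
      · simpa [hir] using h.adj i hir
  rw [h2, card_trees G r, Nat.card_eq_fintype_card, Fintype.card_subtype]
  have h3 : ∀ f ∈ Fintype.piFinset A, (rowmat r f).det = if Good r f then 1 else 0 := by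
    intro f hf
    rw [hmem] at hf
    split_ifs with hg
    · exact det_good hg
    · exact det_bad hg
  rw [Finset.sum_congr rfl h3, Finset.sum_boole]
  congr 2
  ext f
  simp [hmem, -Fintype.mem_piFinset]

end MTT

namespace MTT
variable {V : Type*} [Fintype V] [DecidableEq V]

lemma derivative_det (M : Matrix V V ℂ) :
    (derivative (Matrix.det ((X : ℂ[X]) • (1 : Matrix V V ℂ[X]) + M.map C))).eval 0 =
      ∑ i, M.adjugate i i := by
  simp only [Matrix.adjugate_apply]
  rw [← Matrix.det_transpose, Matrix.det_apply', derivative_sum, eval_finsetSum]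
  have h1 : ∀ i, (M.updateRow i (Pi.single i 1)).det =
      ∑ σ : Equiv.Perm V, ((Equiv.Perm.sign σ : ℤ) : ℂ) *
        ((∏ j ∈ Finset.univ.erase i, M j (σ j)) * if σ i = i then 1 else 0) := by
    intro i
    rw [← Matrix.det_transpose, Matrix.det_apply']
    refine Finset.sum_congr rfl fun σ _ => ?_
    congr 1
    rw [← Finset.prod_erase_mul _ _ (Finset.mem_univ i)]
    congr 1
    · refine Finset.prod_congr rfl fun j hj => ?_
      rw [Matrix.transpose_apply, Matrix.updateRow_ne (Finset.ne_of_mem_erase hj)]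
    · simp [Pi.single_apply]
  simp only [h1]
  rw [Finset.sum_comm]
  refine Finset.sum_congr rfl fun σ _ => ?_
  have : (((Equiv.Perm.sign σ : ℤ) : ℂ[X])) = C (((Equiv.Perm.sign σ : ℤ) : ℂ)) := by simp
  rw [this, derivative_C_mul, eval_C_mul, ← Finset.mul_sum, derivative_prod_finset, eval_finsetSum]
  congr 1
  refine Finset.sum_congr rfl fun i _ => ?_
  rw [eval_mul, eval_prod]
  congr 1
  · refine Finset.prod_congr rfl fun j _ => ?_
    simp [Matrix.one_apply]
    split_ifs <;> simp
  · simp [Matrix.one_apply, eq_comm]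
    split_ifs <;> simp

lemma det_blocks (a b : V → ℂ) :
    (Matrix.fromBlocks (Matrix.diagonal a) (-1) (-1) (Matrix.diagonal b)).det =
      ∏ i, (a i * b i - 1) := by
  have h : Matrix.fromBlocks (Matrix.diagonal a) (-1) (-1) (Matrix.diagonal b) *
      Matrix.fromBlocks 1 0 (Matrix.diagonal a) 1 * Matrix.fromBlocks 1 1 0 1 *
      Matrix.fromBlocks 1 0 (-1) 1 * Matrix.fromBlocks 1 1 0 1 =
      Matrix.fromBlocks 1 0 (-Matrix.diagonal b) (Matrix.diagonal (fun i => a i * b i - 1)) := by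
    have h3 : Matrix.diagonal b * Matrix.diagonal a - 1 =
       Matrix.diagonal (fun i => a i * b i - 1) := by
      rw [Matrix.diagonal_mul_diagonal, ← Matrix.diagonal_one, ← Matrix.diagonal_sub]
      simp [mul_comm]
    rw [← h3]
    generalize Matrix.diagonal a = A
    generalize Matrix.diagonal b = B
    simp only [Matrix.fromBlocks_multiply]
    congr 1 <;> noncomm_ring
  have := congrArg Matrix.det h
  simpa [Matrix.det_mul] using this

variable {n : ℕ} [NeZero n]

noncomputable def F (n : ℕ) [NeZero n] : Matrix (ZMod n) (ZMod n) ℂ :=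
  Matrix.of fun i k => ZMod.stdAddChar (i * k)

def S (c : ZMod n) : Matrix (ZMod n) (ZMod n) ℂ :=
  Matrix.of fun i j => (if i + c = j then 1 else 0) + (if i - c = j then 1 else 0)

noncomputable def lam (c : ZMod n) (k : ZMod n) : ℂ :=
  ZMod.stdAddChar (c * k) + ZMod.stdAddChar (- (c * k))

lemma S_mul_F (c : ZMod n) : S c * F n = F n * Matrix.diagonal (lam c) := by
  ext i k
  simp only [Matrix.mul_apply, S, F, Matrix.of_apply, Matrix.diagonal_apply, lam]
  simp [add_mul, Finset.sum_add_distrib, sub_mul, mul_add, AddChar.map_add_eq_mul, sub_eq_add_neg]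

lemma F_det : (F n).det ≠ 0 := by
  have h : F n * (Matrix.of fun k j => ZMod.stdAddChar (-(k * j))) = (n : ℂ) • 1 := by
    ext i j
    have := AddChar.sum_mulShift (ψ := (ZMod.stdAddChar : AddChar (ZMod n) ℂ)) (i - j)
      (ZMod.isPrimitive_stdAddChar n)
    simp only [Matrix.mul_apply, F, Matrix.of_apply, ← AddChar.map_add_eq_mul, Matrix.smul_apply,
      Matrix.one_apply]
    rw [ZMod.card] at this
    simp only [sub_eq_zero] at this
    convert this using 1
    · refine Finset.sum_congr rfl fun k _ => ?_
      congr 1; ring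
    · split_ifs <;> simp
  have h2 := congrArg Matrix.det h
  rw [Matrix.det_mul, Matrix.det_smul, Matrix.det_one, mul_one] at h2
  intro h0
  rw [h0, zero_mul] at h2
  exact pow_ne_zero _ (Nat.cast_ne_zero.2 (NeZero.ne n)) h2.symm

lemma det_L (x : ℂ) (c d : ZMod n) :
    (x • 1 + Matrix.fromBlocks ((3 : ℂ) • 1 - S c) (-1) (-1) ((3 : ℂ) • 1 - S d)).det =
      ∏ k, ((x + 3 - lam c k) * (x + 3 - lam d k) - 1) := by
  have key : ∀ c : ZMod n, ((x + 3) • 1 - S c) * F n = F n * Matrix.diagonal (fun k => x + 3 - lam c k) := by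
    intro c
    have : Matrix.diagonal (fun k => x + 3 - lam c k) = (x + 3) • 1 - Matrix.diagonal (lam c) := by
      rw [Matrix.smul_one_eq_diagonal, ← Matrix.diagonal_sub]
    rw [this, sub_mul, mul_sub, S_mul_F]
    simp
  have h : (x • 1 + Matrix.fromBlocks ((3 : ℂ) • 1 - S c) (-1) (-1) ((3 : ℂ) • 1 - S d)) *
      Matrix.fromBlocks (F n) 0 0 (F n) = Matrix.fromBlocks (F n) 0 0 (F n) *
      Matrix.fromBlocks (Matrix.diagonal (fun k => x + 3 - lam c k)) (-1) (-1)
       (Matrix.diagonal (fun k => x + 3 - lam d k)) := by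
    rw [← Matrix.fromBlocks_one, Matrix.fromBlocks_smul, Matrix.fromBlocks_add,
      Matrix.fromBlocks_multiply, Matrix.fromBlocks_multiply]
    have e : ∀ c : ZMod n, x • 1 + ((3 : ℂ) • 1 - S c) = (x + 3) • 1 - S c := by
      intro c; rw [add_smul]; abel
    rw [e, e]
    simp [key]
  have h2 := congrArg Matrix.det h
  rw [Matrix.det_mul, Matrix.det_mul, mul_comm, det_blocks] at h2
  refine mul_left_cancel₀ ?_ h2
  rw [Matrix.det_fromBlocks_zero₂₁]
  exact mul_ne_zero F_det F_det

lemma trace_adj (c d : ZMod n) :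
    ∑ i, (Matrix.fromBlocks ((3 : ℂ) • 1 - S c) (-1) (-1) ((3 : ℂ) • 1 - S d)).adjugate i i =
      2 * ∏ k ∈ Finset.univ.erase 0, ((3 - lam c k) * (3 - lam d k) - 1) := by
  rw [← derivative_det]
  have : Matrix.det ((X : ℂ[X]) • (1 : Matrix _ _ ℂ[X]) +
      (Matrix.fromBlocks ((3 : ℂ) • 1 - S c) (-1) (-1) ((3 : ℂ) • 1 - S d)).map C) =
      ∏ k, ((X + C (3 - lam c k)) * (X + C (3 - lam d k)) - 1) := by
    apply Polynomial.funext
    intro x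
    rw [← coe_evalRingHom, RingHom.map_det, map_prod]
    have h2 := det_L x c d
    convert h2 using 2
    · ext i j
      simp [Matrix.one_apply]
      split_ifs <;> simp
    · simp; ring
  rw [this, derivative_prod_finset, eval_finsetSum, Finset.sum_eq_single 0]
  · rw [eval_mul, eval_prod, mul_comm]
    congr 1
    · simp [lam]; norm_num
    · simp
  · intro b _ hb
    rw [eval_mul, eval_prod, Finset.prod_eq_zero (i := 0), zero_mul]
    · simp [hb.symm]
    · simp [lam]; norm_num
  · simp

end MTT

namespace MTT
variable {n : ℕ} [NeZero n]

lemma prod_sub_e (z : ℂ) : ∏ k : ZMod n, (z - ZMod.stdAddChar k) = z ^ n - 1 := by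
  have h : ∏ k : ZMod n, (X - C (ZMod.stdAddChar k : ℂ)) = X ^ n - 1 := by
    rw [X_pow_sub_one_eq_prod (NeZero.pos n) (Complex.isPrimitiveRoot_exp n (NeZero.ne n))]
    have hi : Finset.univ.image (fun k : ZMod n => (ZMod.stdAddChar k : ℂ)) =
        nthRootsFinset n (1 : ℂ) := by
      apply Finset.eq_of_subset_of_card_le
      · intro x hx
        obtain ⟨k, -, rfl⟩ := Finset.mem_image.1 hx
        rw [mem_nthRootsFinset (NeZero.pos n), ← AddChar.map_nsmul_eq_pow]
        simp
      · rw [Finset.card_image_of_injective _ ZMod.injective_stdAddChar,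
          (Complex.isPrimitiveRoot_exp n (NeZero.ne n)).card_nthRootsFinset]
        simp
    rw [← hi, Finset.prod_image (fun a _ b _ h => ZMod.injective_stdAddChar h)]
  have := congrArg (eval z) h
  simpa [eval_prod] using this

lemma prod_cheb (w : ℂ) :
    ∏ k : ZMod n, (2 * w - (ZMod.stdAddChar k + ZMod.stdAddChar (-k))) =
      2 * ((Polynomial.Chebyshev.T ℂ n).eval w - 1) := by
  obtain ⟨θ, rfl⟩ := Complex.cos_surjective w
  rw [Polynomial.Chebyshev.T_complex_cos]
  set z := Complex.exp (θ * Complex.I) with hz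
  have hz0 : z ≠ 0 := Complex.exp_ne_zero _
  have h1 : 2 * Complex.cos θ = z + z⁻¹ := by
    rw [Complex.cos, hz, ← Complex.exp_neg]; ring_nf
  have h2 : 2 * Complex.cos (((n : ℤ) : ℂ) * θ) = z ^ n + (z ^ n)⁻¹ := by
    rw [Complex.cos, hz, ← Complex.exp_nat_mul, ← Complex.exp_neg]; push_cast; ring_nf
  rw [mul_sub, h2]
  have h3 : ∀ k : ZMod n, 2 * Complex.cos θ - ((ZMod.stdAddChar k : ℂ) + ZMod.stdAddChar (-k)) =
      z⁻¹ * ((z - ZMod.stdAddChar k) * (z - ZMod.stdAddChar (-k))) := by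
    intro k
    have : (ZMod.stdAddChar k : ℂ) * ZMod.stdAddChar (-k) = 1 := by
      rw [← AddChar.map_add_eq_mul]; simp
    rw [h1]
    field_simp
    linear_combination -this
  simp only [h3]
  have h4 : ∏ k : ZMod n, (z - ZMod.stdAddChar (-k)) = z ^ n - 1 := by
    rw [← prod_sub_e z]
    exact Equiv.prod_comp (Equiv.neg (ZMod n)) (fun k => z - ZMod.stdAddChar k)
  rw [Finset.prod_mul_distrib, Finset.prod_mul_distrib, h4, prod_sub_e]
  simp
  field_simp
  ring

lemma prod_cheb' (w : ℂ) (hw : w ≠ 1) :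
    ∏ k ∈ Finset.univ.erase (0 : ZMod n), (2 * w - (ZMod.stdAddChar k + ZMod.stdAddChar (-k))) =
      ((Polynomial.Chebyshev.T ℂ n).eval w - 1) / (w - 1) := by
  have h := prod_cheb (n := n) w
  rw [← Finset.prod_erase_mul _ _ (Finset.mem_univ 0)] at h
  have hw' : w - 1 ≠ 0 := sub_ne_zero.2 hw
  rw [eq_div_iff hw']
  simp only [neg_zero, AddChar.map_zero_eq_one] at h
  linear_combination h / 2

lemma prod_one_sub : ∏ k ∈ Finset.univ.erase (0 : ZMod n), (1 - (ZMod.stdAddChar k : ℂ)) = n := by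
  have h : ∏ k ∈ Finset.univ.erase (0 : ZMod n), (X - C (ZMod.stdAddChar k : ℂ)) =
      ∑ i ∈ Finset.range n, X ^ i := by
    apply mul_right_cancel₀ (X_sub_C_ne_zero (1 : ℂ))
    rw [C_1, geom_sum_mul]
    apply Polynomial.funext
    intro z
    have := prod_sub_e (n := n) z
    rw [← Finset.prod_erase_mul _ _ (Finset.mem_univ 0)] at this
    simpa [eval_prod] using this
  have := congrArg (eval 1) h
  simpa [eval_prod, eval_finsetSum] using this

lemma prod_two_sub : ∏ k ∈ Finset.univ.erase (0 : ZMod n),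
    (2 - ((ZMod.stdAddChar k : ℂ) + ZMod.stdAddChar (-k))) = (n : ℂ) ^ 2 := by
  have h3 : ∀ k : ZMod n, 2 - ((ZMod.stdAddChar k : ℂ) + ZMod.stdAddChar (-k)) =
      (1 - ZMod.stdAddChar k) * (1 - ZMod.stdAddChar (-k)) := by
    intro k
    have : (ZMod.stdAddChar k : ℂ) * ZMod.stdAddChar (-k) = 1 := by
      rw [← AddChar.map_add_eq_mul]; simp
    linear_combination -this
  simp only [h3]
  rw [Finset.prod_mul_distrib, prod_one_sub]
  have : ∏ k ∈ Finset.univ.erase (0 : ZMod n), (1 - (ZMod.stdAddChar (-k) : ℂ)) = n := by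
    rw [← prod_one_sub]
    refine Finset.prod_bij (fun k _ => -k) ?_ ?_ ?_ ?_
    · simp
    · simp
    · intro b hb; exact ⟨-b, by simpa using hb, by simp⟩
    · simp
  rw [this, sq]
end MTT

namespace MTT
variable {n : ℕ}

lemma lap_eq [NeZero n] (hn : 7 ≤ n) : (genPetersen n 3).lapMatrix ℂ =
    Matrix.fromBlocks ((3 : ℂ) • 1 - S 1) (-1) (-1) ((3 : ℂ) • 1 - S 3) := by
  have hz : ∀ m : ℕ, 0 < m → m < 7 → (m : ZMod n) ≠ 0 := by
    intro m h1 h2 h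
    rw [ZMod.natCast_eq_zero_iff] at h
    exact absurd (Nat.le_of_dvd h1 h) (by omega)
  have hc : ∀ c : ZMod n, c ≠ 0 → c + c ≠ 0 → ∀ i j : ZMod n,
      (if i ≠ j ∧ (j = i + c ∨ i = j + c) then (1 : ℂ) else 0) = S c i j := by
    intro c h1 h2 i j
    simp only [S, Matrix.of_apply]
    by_cases ha : i + c = j
    · subst ha
      have h3 : i - c ≠ i + c := by
        intro h
        apply h2
        linear_combination -h
      simp [h1, h3]
    · by_cases hb : i - c = j
      · subst hb
        have h5 : i ≠ i - c := by
          intro h; apply h1; linear_combination h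
        simp [ha, h5]
      · have hb' : i ≠ j + c := by
          rintro rfl; apply hb; ring
        simp [ha, hb, hb', Ne.symm ha]
  have h1 : (1 : ZMod n) ≠ 0 := by simpa using hz 1
  have h2 : (1 : ZMod n) + 1 ≠ 0 := by
    have := hz 2 (by norm_num) (by norm_num)
    intro h; apply this; push_cast; linear_combination h
  have h3 : (3 : ZMod n) ≠ 0 := by simpa using hz 3
  have h4 : (3 : ZMod n) + 3 ≠ 0 := by
    have := hz 6 (by norm_num) (by norm_num)
    intro h; apply this; push_cast; linear_combination h
  have hadj : (genPetersen n 3).adjMatrix ℂ = Matrix.fromBlocks (S 1) 1 1 (S 3) := by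
    ext a b
    rcases a with i | i <;> rcases b with j | j
    · rw [SimpleGraph.adjMatrix_apply, Matrix.fromBlocks_apply₁₁, ← hc 1 h1 h2]
      simp [genPetersen, gpRel]
    · rw [SimpleGraph.adjMatrix_apply, Matrix.fromBlocks_apply₁₂, Matrix.one_apply]
      simp [genPetersen, gpRel, eq_comm]
    · rw [SimpleGraph.adjMatrix_apply, Matrix.fromBlocks_apply₂₁, Matrix.one_apply]
      simp [genPetersen, gpRel, eq_comm]
    · rw [SimpleGraph.adjMatrix_apply, Matrix.fromBlocks_apply₂₂, ← hc 3 h3 h4]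
      simp [genPetersen, gpRel]
  have hdeg : ∀ a, ((genPetersen n 3).degree a : ℂ) = 3 := by
    intro a
    rw [SimpleGraph.degree_eq_sum_if_adj]
    have : ∀ b, (if (genPetersen n 3).Adj a b then (1 : ℂ) else 0) =
        Matrix.fromBlocks (S 1) 1 1 (S 3) a b := by
      intro b; rw [← hadj, SimpleGraph.adjMatrix_apply]
    simp only [this, Fintype.sum_sum_type]
    rcases a with i | i
    · simp [S, Finset.sum_add_distrib, Matrix.one_apply]; norm_num
    · simp [S, Finset.sum_add_distrib, Matrix.one_apply]; norm_num
  have hd : (genPetersen n 3).degMatrix ℂ = (3 : ℂ) • 1 := by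
    rw [SimpleGraph.degMatrix, Matrix.smul_one_eq_diagonal]
    congr 1
    ext a
    exact hdeg a
  rw [SimpleGraph.lapMatrix, hd, hadj, ← Matrix.fromBlocks_one, Matrix.fromBlocks_smul,
    sub_eq_add_neg, Matrix.fromBlocks_neg, Matrix.fromBlocks_add]
  simp [sub_eq_add_neg]

end MTT

/-- If `w_1, w_2, w_3` are the roots (with multiplicity) of
`4X³ − 2X² − 5X − 2`, then `τ(GP(n,3)) = n·∏_{s=1}^{3}(T_n(w_s) − 1)/(w_s − 1)`. -/
theorem spanning_trees_GP3 (n : ℕ) (hn : 7 ≤ n) (w : Fin 3 → ℂ)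
    (hw : (C (4 : ℂ)) * X ^ 3 - C 2 * X ^ 2 - C 5 * X - C 2 =
      C (4 : ℂ) * ∏ s : Fin 3, (X - C (w s))) :
    (numSpanningTrees (genPetersen n 3) : ℂ) =
      n * ∏ s : Fin 3,
        ((Polynomial.Chebyshev.T ℂ n).eval (w s) - 1) / (w s - 1) := by
  have : NeZero n := ⟨by omega⟩
  have hev : ∀ x : ℂ, 4 * x ^ 3 - 2 * x ^ 2 - 5 * x - 2 =
      4 * ((x - w 0) * (x - w 1) * (x - w 2)) := by
    intro x
    have := congrArg (eval x) hw
    simpa [Fin.prod_univ_three] using this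
  have hw1 : ∀ s, w s ≠ 1 := by
    intro s hs
    have h := hev 1
    fin_cases s <;> simp at hs <;> rw [hs] at h <;> norm_num at h
  have hsum : (2 * n : ℂ) * numSpanningTrees (genPetersen n 3) =
      2 * ((n : ℂ) ^ 2 * ∏ s : Fin 3,
        ((Polynomial.Chebyshev.T ℂ n).eval (w s) - 1) / (w s - 1)) := by
    have h1 := MTT.trace_adj (n := n) 1 3
    rw [← MTT.lap_eq hn] at h1
    simp only [MTT.adjugate_eq] at h1
    have h2 : ∀ k : ZMod n, (3 - MTT.lam 1 k) * (3 - MTT.lam 3 k) - 1 =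
        (2 - ((ZMod.stdAddChar k : ℂ) + ZMod.stdAddChar (-k))) *
        ∏ s : Fin 3, (2 * w s - ((ZMod.stdAddChar k : ℂ) + ZMod.stdAddChar (-k))) := by
      intro k
      have h3 : (ZMod.stdAddChar (3 * k) : ℂ) = ZMod.stdAddChar k ^ 3 := by
        rw [← AddChar.map_nsmul_eq_pow]; simp
      have h4 : (ZMod.stdAddChar (-(3 * k)) : ℂ) = ZMod.stdAddChar (-k) ^ 3 := by
        rw [← AddChar.map_nsmul_eq_pow]; simp
      have h5 : (ZMod.stdAddChar k : ℂ) * ZMod.stdAddChar (-k) = 1 := by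
        rw [← AddChar.map_add_eq_mul]; simp
      simp only [MTT.lam, one_mul, h3, h4, Fin.prod_univ_three]
      generalize (ZMod.stdAddChar k : ℂ) = a at *
      generalize (ZMod.stdAddChar (-k) : ℂ) = b at *
      have h6 : a ^ 3 + b ^ 3 = (a + b) ^ 3 - 3 * (a + b) := by
        linear_combination (-3 * (a + b)) * h5
      rw [h6]
      generalize a + b = c at *
      have h7 := hev (c / 2)
      linear_combination (2 * (c - 2)) * h7
    simp only [h2] at h1
    rw [Finset.prod_mul_distrib, MTT.prod_two_sub, Finset.prod_comm] at h1
    simp only [fun s => MTT.prod_cheb' (n := n) (w s) (hw1 s)] at h1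
    rw [← h1, Finset.sum_const, Finset.card_univ, Fintype.card_sum, ZMod.card, nsmul_eq_mul]
    push_cast
    ring
  have hn0 : (n : ℂ) ≠ 0 := Nat.cast_ne_zero.2 (NeZero.ne n)
  apply mul_left_cancel₀ (mul_ne_zero two_ne_zero hn0)
  rw [hsum]
  ring
end

section
/- Define integer sequences a, b : ℕ → ℤ both satisfying the recurrence u(n) − 4u(n+1) − u(n+2) − 24u(n+3) + 65u(n+4) − 24u(n+5) − u(n+6) − 4u(n+7) + u(n+8) = 0 for all n ≥ 0, with initial data a(0)=0, a(1)=1, a(2)=4, a(3)=9, a(4)=72, a(5)=320, a(6)=1332, a(7)=6889 and b(0)=1, b(1)=1, b(2)=20, b(3)=83, b(4)=289, b(5)=1693, b(6)=7775, b(7)=34820. Then for every integer n ≥ 4, τ(GP(2n,3)) = 12n·a(n)², and for every integer n ≥ 3, τ(GP(2n+1,3)) = (2n+1)·b(n)². -/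
open Polynomial

namespace GP3

/-! ### The matrix-tree theorem -/

section MatrixTree

set_option linter.unusedSectionVars false

variable {V : Type*} [Fintype V] [DecidableEq V]

lemma numSpanningTrees_eq (G : SimpleGraph V) :
    numSpanningTrees G = Nat.card {T : SimpleGraph V // T ≤ G ∧ T.IsTree} := by
  unfold numSpanningTrees
  refine Nat.card_congr ⟨fun H => ⟨H.1.spanningCoe, H.1.spanningCoe_le,
      (H.1.spanningCoeEquivCoeOfSpanning H.2.1).isTree_iff.2 H.2.2⟩,
    fun T => ⟨SimpleGraph.toSubgraph T.1 T.2.1, SimpleGraph.toSubgraph.isSpanning _ _,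
      ((SimpleGraph.toSubgraph T.1 T.2.1).spanningCoeEquivCoeOfSpanning
        (SimpleGraph.toSubgraph.isSpanning _ _)).isTree_iff.1 T.2.2⟩, ?_, ?_⟩
  · rintro ⟨H, hs, ht⟩
    apply Subtype.ext
    apply SimpleGraph.Subgraph.ext
    · exact (Set.eq_univ_of_forall hs).symm
    · rfl
  · rintro ⟨T, h1, h2⟩
    rfl

/-- Extension of a parent function by fixing the root. -/
def extp (r : V) (p : {v : V // v ≠ r} → V) (v : V) : V :=
  if h : v = r then r else p ⟨v, h⟩

lemma extp_root (r : V) (p : {v : V // v ≠ r} → V) : extp r p r = r := by simp [extp]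

lemma extp_ne (r : V) (p : {v : V // v ≠ r} → V) (v : {v : V // v ≠ r}) :
    extp r p v = p v := by simp [extp, v.2]

/-- All vertices lead to the root. -/
def Good (r : V) (p : {v : V // v ≠ r} → V) : Prop :=
  ∀ v, ∃ k, (extp r p)^[k] v = r

/-- `1 - P`, with `P` the transition matrix of the parent function. -/
def parMat (r : V) (p : {v : V // v ≠ r} → V) :
    Matrix {v : V // v ≠ r} {v : V // v ≠ r} ℤ :=
  fun v w => (if v = w then 1 else 0) - if p v = w then 1 else 0

lemma det_parMat_good (r : V) (p : {v : V // v ≠ r} → V) (hp : Good r p) :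
    (parMat r p).det = 1 := by
  classical
  let d : {v : V // v ≠ r} → ℕᵒᵈ := fun v => OrderDual.toDual (Nat.find (hp v))
  have key : ∀ v w : {v : V // v ≠ r}, p v = w →
      OrderDual.ofDual (d w) < OrderDual.ofDual (d v) := by
    intro v w h
    change Nat.find (hp w) < Nat.find (hp v)
    have h0 : Nat.find (hp v) ≠ 0 := by
      intro h0
      have := Nat.find_spec (hp v)
      rw [h0] at this
      exact v.2 this
    obtain ⟨k, hk⟩ := Nat.exists_eq_succ_of_ne_zero h0
    have h1 := Nat.find_spec (hp v)
    rw [hk, Function.iterate_succ_apply, extp_ne, h] at h1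
    have := Nat.find_min' (hp w) h1
    omega
  have ht : (parMat r p).BlockTriangular d := by
    intro v w hvw
    have h1 : v ≠ w := by rintro rfl; exact lt_irrefl _ hvw
    have h2 : p v ≠ w := by
      intro h
      exact lt_asymm (key v w h) hvw
    simp [parMat, h1, h2]
  rw [ht.det]
  apply Finset.prod_eq_one
  intro a _
  suffices h : (parMat r p).toSquareBlock d a = 1 by rw [h, Matrix.det_one]
  ext ⟨v, hv⟩ ⟨w, hw⟩
  have h2 : p v ≠ w := by
    intro h
    have := key v w h
    rw [hv, hw] at this
    exact lt_irrefl _ this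
  simp [Matrix.toSquareBlock, Matrix.toSquareBlockProp, parMat, h2, Matrix.one_apply]

lemma det_parMat_bad (r : V) (p : {v : V // v ≠ r} → V) (hp : ¬ Good r p) :
    (parMat r p).det = 0 := by
  classical
  apply Matrix.exists_mulVec_eq_zero_iff.1
  let x : V → ℤ := fun v => if ∃ k, (extp r p)^[k] v = r then 0 else 1
  have xr : x r = 0 := if_pos ⟨0, rfl⟩
  have xp : ∀ v : {v : V // v ≠ r}, x (p v) = x v := by
    intro v
    have : (∃ k, (extp r p)^[k] (p v) = r) ↔ (∃ k, (extp r p)^[k] v = r) := by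
      constructor
      · rintro ⟨k, hk⟩
        refine ⟨k + 1, ?_⟩
        rw [Function.iterate_succ_apply, extp_ne, hk]
      · rintro ⟨k, hk⟩
        cases k with
        | zero => exact absurd hk v.2
        | succ k =>
          rw [Function.iterate_succ_apply, extp_ne] at hk
          exact ⟨k, hk⟩
    simp only [x, this]
  refine ⟨fun v => x v, ?_, ?_⟩
  · intro h
    apply hp
    intro v
    by_contra hv
    have hvr : v ≠ r := by rintro rfl; exact hv ⟨0, rfl⟩
    have := congrFun h ⟨v, hvr⟩
    simp [x, hv] at this
  · ext v
    simp only [Matrix.mulVec, dotProduct, parMat, sub_mul, Finset.sum_sub_distrib, ite_mul,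
      one_mul, zero_mul, Finset.sum_ite_eq, Finset.mem_univ, if_true, Pi.zero_apply]
    by_cases h : p v = r
    · have : ∀ w : {v : V // v ≠ r}, p v ≠ w := fun w hw => w.2 (hw ▸ h)
      simp only [this, if_false, Finset.sum_const_zero]
      rw [← xp, h, xr]; rfl
    · rw [Finset.sum_eq_single ⟨p v, h⟩]
      · simp [xp]
      · intro w _ hw
        rw [if_neg]
        intro h'
        exact hw (Subtype.ext h'.symm)
      · simp

/-- The tree of a parent function. -/
def parTree (r : V) (p : {v : V // v ≠ r} → V) : SimpleGraph V :=
  SimpleGraph.fromRel fun a b => a ≠ r ∧ extp r p a = b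

lemma parTree_isTree (r : V) (p : {v : V // v ≠ r} → V) (hp : Good r p) :
    (parTree r p).IsTree := by
  classical
  have step : ∀ v, (parTree r p).Reachable v (extp r p v) := by
    intro v
    by_cases h : v = extp r p v
    · rw [← h]
    · apply SimpleGraph.Adj.reachable
      refine ⟨h, Or.inl ⟨?_, rfl⟩⟩
      rintro rfl
      exact h (extp_root _ _).symm
  have steps : ∀ k v, (parTree r p).Reachable v ((extp r p)^[k] v) := by
    intro k
    induction k with
    | zero => intro v; exact SimpleGraph.Reachable.refl _
    | succ k ih =>
      intro v
      rw [Function.iterate_succ_apply]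
      exact (step v).trans (ih _)
  have root : ∀ v, (parTree r p).Reachable v r := by
    intro v
    obtain ⟨k, hk⟩ := hp v
    have := steps k v
    rwa [hk] at this
  have conn : (parTree r p).Connected :=
    { preconnected := fun v w => (root v).trans (root w).symm
      nonempty := ⟨r⟩ }
  rw [SimpleGraph.isTree_iff_connected_and_card]
  refine ⟨conn, le_antisymm ?_ conn.card_vert_le_card_edgeSet_add_one⟩
  have hsub : (parTree r p).edgeSet ⊆
      Set.range (fun v : {v : V // v ≠ r} => s((v : V), p v)) := by
    intro e
    induction e using Sym2.ind with
    | _ a b =>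
      rintro ⟨_, ⟨h, h'⟩ | ⟨h, h'⟩⟩
      · refine ⟨⟨a, h⟩, ?_⟩
        simp only at h h' ⊢
        rw [← h']; simp [extp, h]
      · refine ⟨⟨b, h⟩, ?_⟩
        simp only at h h' ⊢
        rw [← h']; simp [extp, h, Sym2.eq_swap]
  have h1 : Nat.card (parTree r p).edgeSet ≤ Nat.card {v : V // v ≠ r} := by
    refine (Nat.card_mono (Set.toFinite _) hsub).trans ?_
    exact Finite.card_range_le _
  have h2 : Nat.card {v : V // v ≠ r} + 1 = Nat.card V := by
    have : 0 < Fintype.card V := Fintype.card_pos_iff.2 ⟨r⟩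
    simp [Nat.card_eq_fintype_card]
    omega
  omega

lemma parTree_inj (r : V) (p q : {v : V // v ≠ r} → V) (hp : Good r p)
    (hp0 : ∀ v, p v ≠ v) (h : parTree r p = parTree r q) : p = q := by
  have key : ∀ k v, (extp r p)^[k] v = r → extp r p v = extp r q v := by
    intro k
    induction k with
    | zero =>
      intro v hv
      have hv' : v = r := hv
      subst hv'; simp [extp_root]
    | succ k ih =>
      intro v hv
      by_cases hvr : v = r
      · subst hvr; simp [extp_root]
      rw [Function.iterate_succ_apply] at hv
      have ih' := ih _ hv
      have hne : v ≠ extp r p v := by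
        rw [show extp r p v = p ⟨v, hvr⟩ from extp_ne r p ⟨v, hvr⟩]
        exact (hp0 ⟨v, hvr⟩).symm
      have hadj : (parTree r p).Adj v (extp r p v) := ⟨hne, Or.inl ⟨hvr, rfl⟩⟩
      rw [h] at hadj
      obtain ⟨_, ⟨_, h'⟩ | ⟨h1, h'⟩⟩ := hadj
      · exact h'.symm
      · exfalso
        rw [← ih'] at h'
        have cyc : ∀ m, (extp r p)^[m] v = v ∨ (extp r p)^[m] v = extp r p v := by
          intro m
          induction m with
          | zero => left; rfl
          | succ m ihm =>
            rw [Function.iterate_succ_apply']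
            rcases ihm with e | e
            · right; rw [e]
            · left; rw [e, h']
        obtain ⟨m, hm⟩ := hp v
        rcases cyc m with e | e
        · exact hvr (e ▸ hm)
        · exact h1 (e ▸ hm)
  funext v
  obtain ⟨k, hk⟩ := hp v
  have := key k v hk
  rwa [extp_ne, extp_ne] at this

lemma exists_parTree (r : V) (T : SimpleGraph V) (hT : T.IsTree) :
    ∃ p : {v : V // v ≠ r} → V, Good r p ∧ (∀ v : {v : V // v ≠ r}, T.Adj v (p v)) ∧
      parTree r p = T := by
  have hc := hT.connected
  have h1 : ∀ v : {v : V // v ≠ r}, ∃ u, T.Adj v u ∧ T.dist u r < T.dist v r := by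
    rintro ⟨v, hv⟩
    obtain ⟨w, hw⟩ := hc.exists_walk_length_eq_dist v r
    cases w with
    | nil => exact absurd rfl hv
    | cons h w' =>
      refine ⟨_, h, ?_⟩
      have := SimpleGraph.dist_le w'
      simp only [SimpleGraph.Walk.length_cons] at hw
      simp only
      omega
  choose p hadj hlt using h1
  have good : Good r p := by
    have : ∀ n v, T.dist v r ≤ n → ∃ k, (extp r p)^[k] v = r := by
      intro n
      induction n with
      | zero =>
        intro v hv
        exact ⟨0, hc.dist_eq_zero_iff.1 (Nat.le_zero.1 hv)⟩
      | succ n ih =>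
        intro v hv
        by_cases hvr : v = r
        · exact ⟨0, hvr⟩
        · have := hlt ⟨v, hvr⟩
          obtain ⟨k, hk⟩ := ih (p ⟨v, hvr⟩) (by simp only at this; omega)
          refine ⟨k + 1, ?_⟩
          rw [Function.iterate_succ_apply, show extp r p v = p ⟨v, hvr⟩ from extp_ne r p ⟨v, hvr⟩, hk]
    exact fun v => this _ v le_rfl
  refine ⟨p, good, hadj, ?_⟩
  have hle : parTree r p ≤ T := by
    rintro a b ⟨_, ⟨h, h'⟩ | ⟨h, h'⟩⟩
    · rw [← h', show extp r p a = p ⟨a, h⟩ from extp_ne r p ⟨a, h⟩]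
      exact hadj ⟨a, h⟩
    · rw [← h', show extp r p b = p ⟨b, h⟩ from extp_ne r p ⟨b, h⟩]
      exact (hadj ⟨b, h⟩).symm
  exact le_antisymm hle
    ((SimpleGraph.isTree_iff_minimal_connected.1 hT).2 (parTree_isTree r p good).connected hle)

/-- The matrix-tree theorem. -/
theorem matrix_tree (G : SimpleGraph V) [DecidableRel G.Adj] (r : V) :
    (numSpanningTrees G : ℤ) =
      ((G.lapMatrix ℤ).submatrix (fun v : {v : V // v ≠ r} => (v : V)) (fun v : {v : V // v ≠ r} => (v : V))).det := by
  classical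
  have hrow : (G.lapMatrix ℤ).submatrix (fun v : {v : V // v ≠ r} => (v : V)) (fun v : {v : V // v ≠ r} => (v : V))
      = fun v : {v : V // v ≠ r} => ∑ u ∈ G.neighborFinset v,
        fun w : {v : V // v ≠ r} => (if v = w then (1 : ℤ) else 0) - if u = w then 1 else 0 := by
    ext v w
    rw [Finset.sum_apply, Finset.sum_sub_distrib]
    simp [SimpleGraph.lapMatrix, SimpleGraph.degMatrix, SimpleGraph.adjMatrix_apply,
      Matrix.diagonal_apply, Subtype.ext_iff]
  have hdet : ((G.lapMatrix ℤ).submatrix (fun v : {v : V // v ≠ r} => (v : V))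
      (fun v : {v : V // v ≠ r} => (v : V))).det =
      ∑ p ∈ Fintype.piFinset (fun v : {v : V // v ≠ r} => G.neighborFinset v),
        (parMat r p).det := by
    rw [hrow]
    exact MultilinearMap.map_sum_finset
      (Matrix.detRowAlternating (n := {v : V // v ≠ r}) (R := ℤ)).toMultilinearMap
      (fun v u => fun w : {v : V // v ≠ r} =>
        (if v = w then (1 : ℤ) else 0) - if u = (w : V) then 1 else 0)
      (fun v => G.neighborFinset v)
  rw [hdet, numSpanningTrees_eq]
  have hite : ∀ p : {v : V // v ≠ r} → V, (parMat r p).det = if Good r p then 1 else 0 := by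
    intro p
    split_ifs with h
    · exact det_parMat_good r p h
    · exact det_parMat_bad r p h
  simp only [hite]
  rw [Finset.sum_boole, ← Fintype.card_coe, ← Nat.card_eq_fintype_card]
  congr 1
  symm
  have hm : ∀ p : {v : V // v ≠ r} → V,
      p ∈ (Fintype.piFinset (fun v : {v : V // v ≠ r} => G.neighborFinset v)).filter (Good r) ↔
      (∀ v : {v : V // v ≠ r}, G.Adj v (p v)) ∧ Good r p := by
    intro p
    simp [Fintype.mem_piFinset]
  have hle : ∀ p : {v : V // v ≠ r} → V, (∀ v : {v : V // v ≠ r}, G.Adj v (p v)) →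
      parTree r p ≤ G := by
    rintro p hadj a b ⟨_, ⟨h, h'⟩ | ⟨h, h'⟩⟩
    · rw [← h', show extp r p a = p ⟨a, h⟩ from extp_ne r p ⟨a, h⟩]
      exact hadj ⟨a, h⟩
    · rw [← h', show extp r p b = p ⟨b, h⟩ from extp_ne r p ⟨b, h⟩]
      exact (hadj ⟨b, h⟩).symm
  refine Nat.card_eq_of_bijective
    (fun p => ⟨parTree r p.1, hle _ ((hm _).1 p.2).1, parTree_isTree r p.1 ((hm _).1 p.2).2⟩)
    ⟨?_, ?_⟩
  · rintro ⟨p, hp⟩ ⟨q, hq⟩ h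
    apply Subtype.ext
    rw [hm] at hp
    exact parTree_inj r p q hp.2 (fun v => (hp.1 v).ne') (congrArg Subtype.val h)
  · rintro ⟨T, hTG, hT⟩
    obtain ⟨p, h1, h2, h3⟩ := exists_parTree r T hT
    exact ⟨⟨p, (hm p).2 ⟨fun v => hTG (h2 v), h1⟩⟩, Subtype.ext h3⟩

end MatrixTree
end GP3

namespace GP3

section Border

variable {V : Type*} [Fintype V] [DecidableEq V]

/-- Adding the all-ones matrix to a matrix with zero row and column sums. -/
lemma det_add_ones (M : Matrix V V ℂ) (r : V) (hr : ∀ v, ∑ w, M v w = 0)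
    (hc : ∀ w, ∑ v, M v w = 0) :
    (M + Matrix.of fun _ _ => 1).det = (Fintype.card V : ℂ) ^ 2 *
      (M.submatrix (fun v : {v : V // v ≠ r} => (v : V))
        (fun v : {v : V // v ≠ r} => (v : V))).det := by
  classical
  set A : Matrix V V ℂ := M + Matrix.of fun _ _ => 1 with hA
  set n : ℂ := (Fintype.card V : ℂ) with hn
  have hn0 : n ≠ 0 := by
    have : 0 < Fintype.card V := Fintype.card_pos_iff.2 ⟨r⟩
    rw [hn]; exact_mod_cast this.ne'
  have hrA : ∀ v, ∑ w, A v w = n := by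
    intro v; simp [hA, Finset.sum_add_distrib, hr, hn]
  have hcA : ∀ w, ∑ v, A v w = n := by
    intro v; simp [hA, Finset.sum_add_distrib, hc, hn]
  have split : ∀ f : V → ℂ, ∑ v, f v = f r + ∑ v : {v : V // ¬ v = r}, f v := by
    intro f
    rw [← Fintype.sum_subtype_add_sum_subtype (fun v => v = r) f]
    congr 1
    rw [Finset.sum_congr rfl (fun (i : {v : V // v = r}) _ => congrArg f i.2)]
    simp
  have key : (Matrix.fromBlocks 1 0 (Matrix.of fun _ _ => -n⁻¹) 1 : Matrix ({v : V // v = r} ⊕ {v : V // ¬ v = r}) ({v : V // v = r} ⊕ {v : V // ¬ v = r}) ℂ) *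
      ((Matrix.fromBlocks 1 (Matrix.of fun _ _ => 1) 0 1 : Matrix ({v : V // v = r} ⊕ {v : V // ¬ v = r}) ({v : V // v = r} ⊕ {v : V // ¬ v = r}) ℂ) *
      Matrix.fromBlocks (A.toBlock (fun v => v = r) (fun v => v = r))
        (A.toBlock (fun v => v = r) (fun v => ¬ v = r))
        (A.toBlock (fun v => ¬ v = r) (fun v => v = r))
        (A.toBlock (fun v => ¬ v = r) (fun v => ¬ v = r)) *
      Matrix.fromBlocks 1 0 (Matrix.of fun _ _ => 1) 1) =
      Matrix.fromBlocks (Matrix.of fun _ _ => n ^ 2) (Matrix.of fun _ _ => n) 0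
        (M.submatrix (fun v : {v : V // ¬ v = r} => (v : V)) (fun v : {v : V // ¬ v = r} => (v : V))) := by
    have h1 : (Matrix.fromBlocks 1 (Matrix.of fun _ _ => 1) 0 1 : Matrix ({v : V // v = r} ⊕ {v : V // ¬ v = r}) ({v : V // v = r} ⊕ {v : V // ¬ v = r}) ℂ) *
      Matrix.fromBlocks (A.toBlock (fun v => v = r) (fun v => v = r))
        (A.toBlock (fun v => v = r) (fun v => ¬ v = r))
        (A.toBlock (fun v => ¬ v = r) (fun v => v = r))
        (A.toBlock (fun v => ¬ v = r) (fun v => ¬ v = r)) =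
        Matrix.fromBlocks (Matrix.of fun _ _ => n) (Matrix.of fun _ _ => n)
        (A.toBlock (fun v => ¬ v = r) (fun v => v = r))
        (A.toBlock (fun v => ¬ v = r) (fun v => ¬ v = r)) := by
      rw [Matrix.fromBlocks_multiply]
      rw [Matrix.zero_mul, Matrix.zero_mul, zero_add, zero_add, Matrix.one_mul, Matrix.one_mul,
        Matrix.one_mul, Matrix.one_mul]
      congr 1
      · ext ⟨i, rfl⟩ ⟨j, rfl⟩
        have := hcA j
        rw [split] at this
        simpa [Matrix.mul_apply, Matrix.toBlock] using this
      · ext ⟨i, rfl⟩ j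
        have := hcA j
        rw [split] at this
        simpa [Matrix.mul_apply, Matrix.toBlock] using this
    have h2 : Matrix.fromBlocks (Matrix.of fun (_ : {v : V // v = r}) _ => n) (Matrix.of fun _ _ => n)
        (A.toBlock (fun v => ¬ v = r) (fun v => v = r))
        (A.toBlock (fun v => ¬ v = r) (fun v => ¬ v = r)) *
        (Matrix.fromBlocks 1 0 (Matrix.of fun _ _ => 1) 1 : Matrix ({v : V // v = r} ⊕ {v : V // ¬ v = r}) ({v : V // v = r} ⊕ {v : V // ¬ v = r}) ℂ) =
        Matrix.fromBlocks (Matrix.of fun _ _ => n ^ 2) (Matrix.of fun _ _ => n)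
        (Matrix.of fun _ _ => n)
        (A.toBlock (fun v => ¬ v = r) (fun v => ¬ v = r)) := by
      rw [Matrix.fromBlocks_multiply]
      simp only [Matrix.mul_one, Matrix.mul_zero, zero_add]
      congr 1
      · ext ⟨i, rfl⟩ ⟨j, rfl⟩
        have := split (fun _ => (1 : ℂ))
        simp only [Finset.sum_const, Finset.card_univ, nsmul_eq_mul, mul_one] at this
        simp only [Matrix.add_apply, Matrix.mul_apply, Matrix.of_apply, mul_one,
          Finset.sum_const, Finset.card_univ, nsmul_eq_mul]
        rw [← hn] at this
        linear_combination (-n) * this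
      · ext i ⟨j, rfl⟩
        have := hrA i
        rw [split] at this
        simpa [Matrix.mul_apply, Matrix.toBlock] using this
    rw [h1, h2, Matrix.fromBlocks_multiply]
    simp only [Matrix.one_mul, Matrix.zero_mul, add_zero]
    have hcardR : Fintype.card {v : V // v = r} = 1 := Fintype.card_unique
    congr 1
    · ext i ⟨j, rfl⟩
      simp only [Matrix.add_apply, Matrix.mul_apply, Matrix.of_apply, Finset.sum_const,
        Finset.card_univ, hcardR, one_smul, Matrix.zero_apply]
      field_simp
      ring
    · ext i j
      simp only [Matrix.add_apply, Matrix.mul_apply, Matrix.of_apply, Finset.sum_const,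
        Finset.card_univ, hcardR, one_smul, Matrix.toBlock_apply, Matrix.submatrix_apply, hA]
      field_simp
      ring
  have := congrArg Matrix.det key
  rw [Matrix.det_mul, Matrix.det_mul, Matrix.det_mul, Matrix.det_fromBlocks_zero₁₂,
    Matrix.det_fromBlocks_zero₂₁, Matrix.det_fromBlocks_zero₁₂, Matrix.det_fromBlocks_zero₂₁] at this
  simp only [Matrix.det_one, one_mul, mul_one] at this
  rw [Matrix.det_unique (Matrix.of fun (_ : {v : V // v = r}) (_ : {v : V // v = r}) => n ^ 2)] at this
  rw [A.det_toBlock (fun v => v = r)]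
  rw [Matrix.of_apply] at this
  convert this using 1
  congr!

lemma tree_det (G : SimpleGraph V) [DecidableRel G.Adj] (r : V) :
    (G.lapMatrix ℂ + Matrix.of fun _ _ => 1).det =
      (Fintype.card V : ℂ) ^ 2 * (numSpanningTrees G : ℂ) := by
  have hr : ∀ v, ∑ w, G.lapMatrix ℂ v w = 0 := by
    intro v
    have := congrFun (G.lapMatrix_mulVec_const_eq_zero (R := ℂ)) v
    simpa [Matrix.mulVec, dotProduct] using this
  rw [det_add_ones (G.lapMatrix ℂ) r hr]
  · congr 1
    have := congrArg (Int.cast : ℤ → ℂ) (matrix_tree G r)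
    rw [Int.cast_natCast] at this
    rw [this]
    have h2 := RingHom.map_det (Int.castRingHom ℂ)
      ((G.lapMatrix ℤ).submatrix (fun v : {v : V // v ≠ r} => (v : V))
        (fun v : {v : V // v ≠ r} => (v : V)))
    simp only [Int.coe_castRingHom] at h2
    rw [h2]
    congr 1
    ext v w
    simp [SimpleGraph.lapMatrix, SimpleGraph.degMatrix, SimpleGraph.adjMatrix_apply,
      Matrix.diagonal_apply]
  · intro w
    have h := G.isSymm_lapMatrix (R := ℂ)
    rw [← hr w]
    exact Finset.sum_congr rfl fun v _ => h.apply w v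
end Border
end GP3

namespace GP3

section Circ
set_option linter.unusedSectionVars false

open Matrix

lemma det_fromBlocks_diagonal {n : Type*} [Fintype n] [DecidableEq n] (a b c d : n → ℂ) :
    (fromBlocks (diagonal a) (diagonal b) (diagonal c) (diagonal d)).det =
      ∏ k, (a k * d k - b k * c k) := by
  let e : Fin 2 × n ≃ n ⊕ n := (finTwoEquiv.prodCongr (Equiv.refl n)).trans (Equiv.boolProdEquivSum n)
  rw [← det_submatrix_equiv_self e]
  have : (fromBlocks (diagonal a) (diagonal b) (diagonal c) (diagonal d)).submatrix e e =
      blockDiagonal (fun k => !![a k, b k; c k, d k]) := by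
    ext ⟨i, k⟩ ⟨j, l⟩
    fin_cases i <;> fin_cases j <;>
      simp [e, finTwoEquiv, Equiv.boolProdEquivSum, blockDiagonal_apply, diagonal_apply]
  rw [this, det_blockDiagonal]
  simp [det_fin_two_of]

variable (N : ℕ) [NeZero N]

/-- The discrete Fourier matrix. -/
noncomputable def fm : Matrix (ZMod N) (ZMod N) ℂ := fun i k => ZMod.stdAddChar (i * k)

lemma det_fm_ne : (fm N).det ≠ 0 := by
  intro h
  have key : fm N * (Matrix.of fun i k : ZMod N => (ZMod.stdAddChar (-(i * k)) : ℂ)) =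
      (N : ℂ) • (1 : Matrix (ZMod N) (ZMod N) ℂ) := by
    ext i k
    have := AddChar.sum_mulShift (R := ZMod N) (R' := ℂ) (i - k)
      (ZMod.isPrimitive_stdAddChar N)
    simp only [mul_apply, fm, of_apply, ← AddChar.map_add_eq_mul, Matrix.smul_apply, Matrix.one_apply]
    rw [ZMod.card] at this
    rw [Finset.sum_congr rfl (g := fun x => (ZMod.stdAddChar (x * (i - k)) : ℂ)), this]
    · simp [sub_eq_zero]
    · intro x _
      congr 1
      ring
  have h2 := congrArg Matrix.det key
  rw [det_mul, h, zero_mul, det_smul, det_one, mul_one] at h2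
  exact pow_ne_zero _ (Nat.cast_ne_zero.2 (NeZero.ne N)) h2.symm

/-- Fourier transform. -/
noncomputable def ft (v : ZMod N → ℂ) (k : ZMod N) : ℂ :=
  ∑ x, v x * ZMod.stdAddChar (-(x * k))

lemma circ_mul_fm (v : ZMod N → ℂ) :
    circulant v * fm N = fm N * diagonal (ft N v) := by
  ext i k
  rw [mul_diagonal, mul_apply, fm, ft, Finset.mul_sum]
  rw [← (Equiv.subLeft i).sum_comp]
  apply Finset.sum_congr rfl
  intro x _
  simp only [circulant_apply, Equiv.subLeft_apply, fm, sub_sub_cancel]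
  rw [mul_left_comm, ← AddChar.map_add_eq_mul]
  congr 2
  ring

lemma det_circ (a b c d : ZMod N → ℂ) :
    (fromBlocks (circulant a) (circulant b) (circulant c) (circulant d)).det =
      ∏ k, (ft N a k * ft N d k - ft N b k * ft N c k) := by
  rw [← det_fromBlocks_diagonal]
  have key : fromBlocks (circulant a) (circulant b) (circulant c) (circulant d) *
      fromBlocks (fm N) 0 0 (fm N) = fromBlocks (fm N) 0 0 (fm N) *
      fromBlocks (diagonal (ft N a)) (diagonal (ft N b)) (diagonal (ft N c))
        (diagonal (ft N d)) := by
    simp [fromBlocks_multiply, circ_mul_fm]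
  have h := congrArg Matrix.det key
  rw [det_mul, det_mul, mul_comm] at h
  refine mul_left_cancel₀ ?_ h
  rw [det_fromBlocks_zero₁₂]
  exact mul_ne_zero (det_fm_ne N) (det_fm_ne N)

end Circ

section Lap
set_option linter.unusedSectionVars false
open Matrix

variable (N : ℕ) [NeZero N]

/-- First diagonal block. -/
noncomputable def al (x : ZMod N) : ℂ :=
  3 * (if x = 0 then 1 else 0) - (if x = 1 then 1 else 0) - (if x = -1 then 1 else 0) + 1
/-- Off-diagonal block. -/
noncomputable def be (x : ZMod N) : ℂ := 1 - (if x = 0 then 1 else 0)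
/-- Second diagonal block. -/
noncomputable def de (x : ZMod N) : ℂ :=
  3 * (if x = 0 then 1 else 0) - (if x = 3 then 1 else 0) - (if x = -3 then 1 else 0) + 1

lemma small_ne (hN : 7 ≤ N) (m : ℕ) (hm : 0 < m) (hm' : m < 7) : (m : ZMod N) ≠ 0 := by
  rw [Ne, ZMod.natCast_eq_zero_iff]
  intro h
  have := Nat.le_of_dvd hm h
  omega

lemma adj_ll (hN : 7 ≤ N) (i j : ZMod N) :
    (if (genPetersen N 3).Adj (Sum.inl i) (Sum.inl j) then (1 : ℂ) else 0) =
      (if j = i + 1 then 1 else 0) + (if j = i - 1 then 1 else 0) := by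
  have h1 := small_ne N hN 1 (by norm_num) (by norm_num)
  have h2 := small_ne N hN 2 (by norm_num) (by norm_num)
  push_cast at h1 h2
  have e : (genPetersen N 3).Adj (Sum.inl i) (Sum.inl j) ↔ (j = i + 1 ∨ j = i - 1) := by
    change (_ ≠ _ ∧ (j = i + 1 ∨ i = j + 1)) ↔ _
    constructor
    · rintro ⟨_, h | h⟩
      · exact Or.inl h
      · right; rw [h]; ring
    · rintro (h | h)
      · refine ⟨?_, Or.inl h⟩
        intro h'
        have := Sum.inl.inj h'
        apply h1; rw [this] at h; linear_combination -h
      · refine ⟨?_, Or.inr (by rw [h]; ring)⟩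
        intro h'
        have := Sum.inl.inj h'
        apply h1; rw [this] at h; linear_combination h
  have ex : ¬ (j = i + 1 ∧ j = i - 1) := by
    rintro ⟨h, h'⟩
    apply h2
    linear_combination h' - h
  simp only [e]
  by_cases ha : j = i + 1 <;> by_cases hb : j = i - 1 <;> simp_all

lemma adj_rr (hN : 7 ≤ N) (i j : ZMod N) :
    (if (genPetersen N 3).Adj (Sum.inr i) (Sum.inr j) then (1 : ℂ) else 0) =
      (if j = i + 3 then 1 else 0) + (if j = i - 3 then 1 else 0) := by
  have h1 := small_ne N hN 3 (by norm_num) (by norm_num)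
  have h2 := small_ne N hN 6 (by norm_num) (by norm_num)
  push_cast at h1 h2
  have e : (genPetersen N 3).Adj (Sum.inr i) (Sum.inr j) ↔ (j = i + 3 ∨ j = i - 3) := by
    change (_ ≠ _ ∧ (j = i + ((3 : ℕ) : ZMod N) ∨ i = j + ((3 : ℕ) : ZMod N))) ↔ _
    push_cast
    constructor
    · rintro ⟨_, h | h⟩
      · exact Or.inl h
      · right; rw [h]; ring
    · rintro (h | h)
      · refine ⟨?_, Or.inl h⟩
        intro h'
        have := Sum.inr.inj h'
        apply h1; rw [this] at h; linear_combination -h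
      · refine ⟨?_, Or.inr (by rw [h]; ring)⟩
        intro h'
        have := Sum.inr.inj h'
        apply h1; rw [this] at h; linear_combination h
  have ex : ¬ (j = i + 3 ∧ j = i - 3) := by
    rintro ⟨h, h'⟩
    apply h2
    linear_combination h' - h
  simp only [e]
  by_cases ha : j = i + 3 <;> by_cases hb : j = i - 3 <;> simp_all

lemma adj_lr (i j : ZMod N) :
    (if (genPetersen N 3).Adj (Sum.inl i) (Sum.inr j) then (1 : ℂ) else 0) =
      (if j = i then 1 else 0) := by
  have e : (genPetersen N 3).Adj (Sum.inl i) (Sum.inr j) ↔ j = i := by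
    change (_ ≠ _ ∧ (j = i ∨ False)) ↔ _
    simp
  simp only [e]

lemma adj_rl (i j : ZMod N) :
    (if (genPetersen N 3).Adj (Sum.inr i) (Sum.inl j) then (1 : ℂ) else 0) =
      (if j = i then 1 else 0) := by
  have e : (genPetersen N 3).Adj (Sum.inr i) (Sum.inl j) ↔ j = i := by
    change (_ ≠ _ ∧ (False ∨ i = j)) ↔ _
    simp [eq_comm]
  simp only [e]

lemma deg3 (hN : 7 ≤ N) (v : ZMod N ⊕ ZMod N) : ((genPetersen N 3).degree v : ℂ) = 3 := by
  rw [SimpleGraph.degree_eq_sum_if_adj, Fintype.sum_sum_type]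
  rcases v with i | i
  · simp only [adj_ll N hN, adj_lr, Finset.sum_add_distrib, Finset.sum_ite_eq', Finset.mem_univ,
      if_true]
    norm_num
  · simp only [adj_rr N hN, adj_rl, Finset.sum_add_distrib, Finset.sum_ite_eq', Finset.mem_univ,
      if_true]
    norm_num

lemma lap_blocks (hN : 7 ≤ N) :
    (genPetersen N 3).lapMatrix ℂ + Matrix.of (fun _ _ => 1) =
      fromBlocks (circulant (al N)) (circulant (be N)) (circulant (be N)) (circulant (de N)) := by
  ext v w
  simp only [Matrix.add_apply, SimpleGraph.lapMatrix, SimpleGraph.degMatrix, Matrix.sub_apply, of_apply,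
    diagonal_apply, SimpleGraph.adjMatrix_apply, deg3 N hN]
  rcases v with i | i <;> rcases w with j | j
  · have e1 : (j = i + 1) ↔ (i - j = -1) :=
      ⟨fun h => by rw [h]; ring, fun h => by linear_combination -h⟩
    have e2 : (j = i - 1) ↔ (i - j = 1) :=
      ⟨fun h => by rw [h]; ring, fun h => by linear_combination -h⟩
    simp only [adj_ll N hN, fromBlocks_apply₁₁, circulant_apply, al, e1, e2, Sum.inl.injEq,
      sub_eq_zero]
    by_cases h : i = j <;> simp only [h, if_true, if_false] <;> ring
  · simp only [adj_lr, fromBlocks_apply₁₂, circulant_apply, be, reduceCtorEq, if_false,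
      sub_eq_zero, eq_comm (a := j)]
    ring
  · simp only [adj_rl, fromBlocks_apply₂₁, circulant_apply, be, reduceCtorEq, if_false,
      sub_eq_zero, eq_comm (a := j)]
    ring
  · have e1 : (j = i + 3) ↔ (i - j = -3) :=
      ⟨fun h => by rw [h]; ring, fun h => by linear_combination -h⟩
    have e2 : (j = i - 3) ↔ (i - j = 3) :=
      ⟨fun h => by rw [h]; ring, fun h => by linear_combination -h⟩
    simp only [adj_rr N hN, fromBlocks_apply₂₂, circulant_apply, de, e1, e2, Sum.inr.injEq,
      sub_eq_zero]
    by_cases h : i = j <;> simp only [h, if_true, if_false] <;> ring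

/-- Abbreviation for the standard additive character. -/
noncomputable def ch (k : ZMod N) : ℂ := ZMod.stdAddChar k

lemma ch_zero : ch N 0 = 1 := by simp [ch]
lemma ch_add (k l : ZMod N) : ch N (k + l) = ch N k * ch N l := AddChar.map_add_eq_mul _ _ _
lemma ch_neg (k : ZMod N) : ch N (-k) = (ch N k)⁻¹ := AddChar.map_neg_eq_inv _ _
lemma ch_ne (k : ZMod N) : ch N k ≠ 0 := by
  intro h
  have := ch_add N k (-k)
  rw [h, zero_mul, add_neg_cancel, ch_zero] at this
  exact one_ne_zero this

lemma sum_ch (k : ZMod N) : ∑ x, ch N (-(x * k)) = if k = 0 then (N : ℂ) else 0 := by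
  have := AddChar.sum_mulShift (R := ZMod N) (R' := ℂ) (-k) (ZMod.isPrimitive_stdAddChar N)
  rw [ZMod.card] at this
  simpa [ch] using this

lemma ft_al (k : ZMod N) :
    ft N (al N) k = 3 - ch N k - (ch N k)⁻¹ + if k = 0 then (N : ℂ) else 0 := by
  have : ft N (al N) k = ∑ x, al N x * ch N (-(x * k)) := rfl
  rw [this]
  simp only [al, add_mul, sub_mul, Finset.sum_add_distrib, Finset.sum_sub_distrib, mul_assoc,
    ite_mul, one_mul, zero_mul, ← Finset.mul_sum, Finset.sum_ite_eq', Finset.mem_univ, if_true,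
    sum_ch]
  rw [neg_zero, ch_zero, ch_neg, neg_one_mul, neg_neg]
  ring

lemma ft_be (k : ZMod N) :
    ft N (be N) k = -1 + if k = 0 then (N : ℂ) else 0 := by
  have : ft N (be N) k = ∑ x, be N x * ch N (-(x * k)) := rfl
  rw [this]
  simp only [be, sub_mul, Finset.sum_sub_distrib,
    ite_mul, one_mul, zero_mul, Finset.sum_ite_eq', Finset.mem_univ, if_true,
    sum_ch]
  rw [neg_zero, ch_zero]
  ring

lemma ch_three (k : ZMod N) : ch N (3 * k) = ch N k ^ 3 := by
  rw [show 3 * k = k + k + k by ring, ch_add, ch_add]; ring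

lemma ft_de (k : ZMod N) :
    ft N (de N) k = 3 - ch N k ^ 3 - ((ch N k)⁻¹) ^ 3 + if k = 0 then (N : ℂ) else 0 := by
  have : ft N (de N) k = ∑ x, de N x * ch N (-(x * k)) := rfl
  rw [this]
  simp only [de, add_mul, sub_mul, Finset.sum_add_distrib, Finset.sum_sub_distrib, mul_assoc,
    ite_mul, one_mul, zero_mul, ← Finset.mul_sum, Finset.sum_ite_eq', Finset.mem_univ, if_true,
    sum_ch]
  rw [neg_zero, ch_zero, ch_neg, neg_mul, neg_neg, ch_three, inv_pow]
  ring

lemma tau_prod (hN : 7 ≤ N) :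
    (N : ℂ) * (numSpanningTrees (genPetersen N 3) : ℂ) =
      ∏ k ∈ Finset.univ.erase (0 : ZMod N),
        ((3 - ch N k - (ch N k)⁻¹) * (3 - ch N k ^ 3 - ((ch N k)⁻¹) ^ 3) - 1) := by
  have h := tree_det (genPetersen N 3) (Sum.inl 0)
  rw [lap_blocks N hN, det_circ, ← Finset.mul_prod_erase _ _ (Finset.mem_univ (0 : ZMod N))] at h
  have hN0 : (N : ℂ) ≠ 0 := Nat.cast_ne_zero.2 (NeZero.ne N)
  rw [Finset.prod_congr rfl (g := fun k => ((3 - ch N k - (ch N k)⁻¹) *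
    (3 - ch N k ^ 3 - ((ch N k)⁻¹) ^ 3) - 1))] at h
  · rw [ft_al, ft_be, ft_de, ch_zero, Fintype.card_sum, ZMod.card] at h
    simp only [if_true] at h
    push_cast at h
    have h4 : (4 * (N : ℂ)) ≠ 0 := mul_ne_zero (by norm_num) hN0
    apply mul_left_cancel₀ h4
    linear_combination -h
  · intro k hk
    have hk0 := Finset.ne_of_mem_erase hk
    rw [ft_al, ft_be, ft_de]
    simp only [hk0, if_false]
    ring

lemma prod_ch (x : ℂ) :
    ∏ k ∈ Finset.univ.erase (0 : ZMod N), (x - ch N k) = ∑ i ∈ Finset.range N, x ^ i := by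
  classical
  have hpos : 0 < N := NeZero.pos N
  have hprim : ∃ ζ : ℂ, IsPrimitiveRoot ζ N := ⟨_, Complex.isPrimitiveRoot_exp N hpos.ne'⟩
  obtain ⟨ζ, hζ⟩ := hprim
  have himg : Finset.univ.image (ch N) = nthRootsFinset N (1 : ℂ) := by
    apply Finset.eq_of_subset_of_card_le
    · intro z hz
      obtain ⟨k, _, rfl⟩ := Finset.mem_image.1 hz
      rw [mem_nthRootsFinset hpos]
      have : ch N k ^ N = ch N (N • k) := (AddChar.map_nsmul_eq_pow _ _ _).symm
      rw [this]
      simp [ch_zero]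
    · rw [hζ.card_nthRootsFinset, Finset.card_image_of_injective, Finset.card_univ, ZMod.card]
      exact ZMod.injective_stdAddChar
  have hX : (X ^ N - 1 : ℂ[X]) = ∏ k : ZMod N, (X - C (ch N k)) := by
    rw [X_pow_sub_one_eq_prod hpos hζ, ← himg, Finset.prod_image]
    intro a _ b _ hab
    exact ZMod.injective_stdAddChar hab
  rw [← Finset.mul_prod_erase _ _ (Finset.mem_univ (0 : ZMod N)), ch_zero, ← mul_geom_sum] at hX
  have hX1 : (X - C 1 : ℂ[X]) ≠ 0 := X_sub_C_ne_zero 1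
  rw [C_1] at hX hX1
  have h := congrArg (eval x) (mul_left_cancel₀ hX1 hX)
  simp only [eval_finsetSum, eval_prod, eval_pow, eval_X, eval_sub, eval_C] at h
  exact h.symm

lemma prod_ch_inv (f : ℂ → ℂ) :
    ∏ k ∈ Finset.univ.erase (0 : ZMod N), f (ch N k)⁻¹ =
      ∏ k ∈ Finset.univ.erase (0 : ZMod N), f (ch N k) := by
  refine Finset.prod_bij' (fun k _ => -k) (fun k _ => -k) ?_ ?_ ?_ ?_ ?_
  · intro k hk
    simpa using hk
  · intro k hk
    simpa using hk
  · intro k hk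
    exact neg_neg k
  · intro k hk
    exact neg_neg k
  · intro k hk
    rw [ch_neg]

lemma prod_quad (r : ℂ) (hr : r ≠ 0) :
    ∏ k ∈ Finset.univ.erase (0 : ZMod N), (r + r⁻¹ - ch N k - (ch N k)⁻¹) =
      (r⁻¹) ^ (N - 1) * (∑ i ∈ Finset.range N, r ^ i) ^ 2 := by
  have : ∀ k, (r + r⁻¹ - ch N k - (ch N k)⁻¹) = r⁻¹ * (r - ch N k) * (r - (ch N k)⁻¹) := by
    intro k
    have := ch_ne N k
    field_simp
    ring
  simp only [this, Finset.prod_mul_distrib]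
  rw [prod_ch_inv N (fun z => r - z), prod_ch, Finset.prod_const,
    Finset.card_erase_of_mem (Finset.mem_univ _), Finset.card_univ, ZMod.card]
  ring

lemma tau_formula (hN : 7 ≤ N) (r₁ r₂ r₃ : ℂ) (h₁ : r₁ ≠ 0) (h₂ : r₂ ≠ 0) (h₃ : r₃ ≠ 0)
    (e1 : (r₁ + r₁⁻¹) + (r₂ + r₂⁻¹) + (r₃ + r₃⁻¹) = 1)
    (e2 : (r₁ + r₁⁻¹) * (r₂ + r₂⁻¹) + (r₁ + r₁⁻¹) * (r₃ + r₃⁻¹) + (r₂ + r₂⁻¹) * (r₃ + r₃⁻¹) = -5)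
    (e3 : (r₁ + r₁⁻¹) * (r₂ + r₂⁻¹) * (r₃ + r₃⁻¹) = 4) :
    (numSpanningTrees (genPetersen N 3) : ℂ) = N *
      (((r₁⁻¹) ^ (N - 1) * (∑ i ∈ Finset.range N, r₁ ^ i) ^ 2) *
      ((r₂⁻¹) ^ (N - 1) * (∑ i ∈ Finset.range N, r₂ ^ i) ^ 2) *
      ((r₃⁻¹) ^ (N - 1) * (∑ i ∈ Finset.range N, r₃ ^ i) ^ 2)) := by
  have hN0 : (N : ℂ) ≠ 0 := Nat.cast_ne_zero.2 (NeZero.ne N)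
  apply mul_left_cancel₀ hN0
  rw [tau_prod N hN, ← prod_quad N r₁ h₁, ← prod_quad N r₂ h₂, ← prod_quad N r₃ h₃]
  have hone : ∏ k ∈ Finset.univ.erase (0 : ZMod N), (1 + 1⁻¹ - ch N k - (ch N k)⁻¹) =
      (N : ℂ) ^ 2 := by
    rw [prod_quad N 1 one_ne_zero]; simp
  rw [← mul_assoc, ← pow_two, ← hone, ← Finset.prod_mul_distrib, ← Finset.prod_mul_distrib,
    ← Finset.prod_mul_distrib]
  apply Finset.prod_congr rfl
  intro k _
  have hz := ch_ne N k
  generalize ch N k = z at hz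
  generalize r₁ + r₁⁻¹ = w₁ at *
  generalize r₂ + r₂⁻¹ = w₂ at *
  generalize r₃ + r₃⁻¹ = w₃ at *
  have hzz : z * z⁻¹ = 1 := mul_inv_cancel₀ hz
  generalize z⁻¹ = y at *
  have expand : (w₁ - z - y) * (w₂ - z - y) * (w₃ - z - y) =
      4 + 5 * (z + y) + (z + y) ^ 2 - (z + y) ^ 3 := by
    linear_combination e3 - (z + y) * e2 + (z + y) ^ 2 * e1
  rw [show (1 + 1⁻¹ - z - y) * ((w₁ - z - y) * (w₂ - z - y) * (w₃ - z - y)) =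
    (2 - z - y) * ((w₁ - z - y) * (w₂ - z - y) * (w₃ - z - y)) by norm_num, expand]
  have hy3 : y ^ 3 * z ^ 3 = 1 := by rw [← mul_pow, mul_comm, hzz, one_pow]
  have c3 : z ^ 3 + y ^ 3 = (z + y) ^ 3 - 3 * (z + y) := by
    linear_combination (-3 * (z + y)) * hzz
  have : (3 - z - y) * (3 - z ^ 3 - y ^ 3) - 1 =
    (3 - (z + y)) * (3 - ((z + y) ^ 3 - 3 * (z + y))) - 1 := by rw [← c3]; ring
  rw [this]
  ring

end Lap
end GP3

namespace GP3

/-! ### The integer sequences -/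

section Seqs

lemma exists_quad (b c : ℂ) : ∃ x : ℂ, x ^ 2 - b * x + c = 0 := by
  obtain ⟨d, hd⟩ := IsAlgClosed.exists_pow_nat_eq (b ^ 2 - 4 * c) (n := 2) (by norm_num)
  exact ⟨(b + d) / 2, by linear_combination hd / 4⟩

lemma exists_cubic : ∃ x : ℂ, x ^ 3 = x ^ 2 + 5 * x + 4 := by
  obtain ⟨x, hx⟩ := IsAlgClosed.exists_root (X ^ 3 + (- X ^ 2 - C 5 * X - C 4) : ℂ[X]) (by
    have : (X ^ 3 + (- X ^ 2 - C 5 * X - C 4) : ℂ[X]).degree = 3 := by compute_degree!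
    rw [this]; norm_num)
  refine ⟨x, ?_⟩
  simp [Polynomial.IsRoot] at hx
  linear_combination hx

lemma exists_inv_sum (w : ℂ) : ∃ r : ℂ, r ≠ 0 ∧ r + r⁻¹ = w := by
  obtain ⟨r, hr⟩ := exists_quad w 1
  have h0 : r ≠ 0 := by
    rintro rfl
    simp at hr
  refine ⟨r, h0, ?_⟩
  field_simp
  linear_combination hr

lemma exists_ws : ∃ w₁ w₂ w₃ : ℂ, w₁ + w₂ + w₃ = 1 ∧ w₁ * w₂ + w₁ * w₃ + w₂ * w₃ = -5 ∧
    w₁ * w₂ * w₃ = 4 := by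
  obtain ⟨w, hw⟩ := exists_cubic
  obtain ⟨v, hv⟩ := exists_quad (1 - w) (w ^ 2 - w - 5)
  exact ⟨w, v, 1 - w - v, by ring, by linear_combination -hv,
    by linear_combination hw - w * hv⟩

lemma cubic_of (w₁ w₂ w₃ : ℂ) (e1 : w₁ + w₂ + w₃ = 1)
    (e2 : w₁ * w₂ + w₁ * w₃ + w₂ * w₃ = -5) (e3 : w₁ * w₂ * w₃ = 4) :
    w₁ ^ 3 = w₁ ^ 2 + 5 * w₁ + 4 ∧ w₂ ^ 3 = w₂ ^ 2 + 5 * w₂ + 4 ∧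
      w₃ ^ 3 = w₃ ^ 2 + 5 * w₃ + 4 :=
  ⟨by linear_combination w₁ ^ 2 * e1 - w₁ * e2 + e3,
   by linear_combination w₂ ^ 2 * e1 - w₂ * e2 + e3,
   by linear_combination w₃ ^ 2 * e1 - w₃ * e2 + e3⟩

lemma norm_quad (w₁ w₂ w₃ : ℂ) (e1 : w₁ + w₂ + w₃ = 1)
    (e2 : w₁ * w₂ + w₁ * w₃ + w₂ * w₃ = -5) (e3 : w₁ * w₂ * w₃ = 4) (A B C : ℂ) :
    (A * w₁ ^ 2 + B * w₁ + C) * (A * w₂ ^ 2 + B * w₂ + C) * (A * w₃ ^ 2 + B * w₃ + C) =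
      16 * A ^ 3 - 20 * A ^ 2 * B + 17 * A ^ 2 * C + 4 * A * B ^ 2 - 17 * A * B * C
      + 11 * A * C ^ 2 + 4 * B ^ 3 - 5 * B ^ 2 * C + B * C ^ 2 + C ^ 3 := by
  have f1 : (w₁ * w₂ * w₃) ^ 2 = 16 := by rw [e3]; norm_num
  have f2 : (w₁ * w₂ * w₃) * (w₁ * w₂ + w₁ * w₃ + w₂ * w₃) = -20 := by rw [e3, e2]; norm_num
  have f3 : (w₁ * w₂ + w₁ * w₃ + w₂ * w₃) ^ 2 - 2 * (w₁ * w₂ * w₃) * (w₁ + w₂ + w₃) = 17 := by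
    rw [e3, e2, e1]; norm_num
  have f4 : (w₁ * w₂ * w₃) * (w₁ + w₂ + w₃) = 4 := by rw [e3, e1]; norm_num
  have f5 : (w₁ + w₂ + w₃) * (w₁ * w₂ + w₁ * w₃ + w₂ * w₃) - 3 * (w₁ * w₂ * w₃) = -17 := by
    rw [e3, e2, e1]; norm_num
  have f6 : (w₁ + w₂ + w₃) ^ 2 - 2 * (w₁ * w₂ + w₁ * w₃ + w₂ * w₃) = 11 := by
    rw [e2, e1]; norm_num
  linear_combination A ^ 3 * f1 + A ^ 2 * B * f2 + A ^ 2 * C * f3 + A * B ^ 2 * f4 +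
    A * B * C * f5 + A * C ^ 2 * f6 + B ^ 3 * e3 + B ^ 2 * C * e2 + B * C ^ 2 * e1

lemma vals_s (w : ℂ) (hw : w ^ 3 = w ^ 2 + 5 * w + 4) (f : ℕ → ℂ) (h0 : f 0 = 0) (h1 : f 1 = 1)
    (hf : ∀ n, f (n + 2) = w * f (n + 1) - f n) :
    f 0 = (0) * w ^ 2 + (0) * w + (0) ∧
    f 1 = (0) * w ^ 2 + (0) * w + (1) ∧
    f 2 = (0) * w ^ 2 + (1) * w + (0) ∧
    f 3 = (1) * w ^ 2 + (0) * w + (-1) ∧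
    f 4 = (1) * w ^ 2 + (3) * w + (4) ∧
    f 5 = (3) * w ^ 2 + (9) * w + (5) ∧
    f 6 = (11) * w ^ 2 + (17) * w + (8) ∧
    f 7 = (25) * w ^ 2 + (54) * w + (39) := by
  have h2 : f 2 = (0) * w ^ 2 + (1) * w + (0) := by
    linear_combination hf 0 + w * h1 - h0 + (0) * hw
  have h3 : f 3 = (1) * w ^ 2 + (0) * w + (-1) := by
    linear_combination hf 1 + w * h2 - h1 + (0) * hw
  have h4 : f 4 = (1) * w ^ 2 + (3) * w + (4) := by
    linear_combination hf 2 + w * h3 - h2 + (1) * hw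
  have h5 : f 5 = (3) * w ^ 2 + (9) * w + (5) := by
    linear_combination hf 3 + w * h4 - h3 + (1) * hw
  have h6 : f 6 = (11) * w ^ 2 + (17) * w + (8) := by
    linear_combination hf 4 + w * h5 - h4 + (3) * hw
  have h7 : f 7 = (25) * w ^ 2 + (54) * w + (39) := by
    linear_combination hf 5 + w * h6 - h5 + (11) * hw
  exact ⟨by rw [h0]; ring, by rw [h1]; ring, h2, h3, h4, h5, h6, h7⟩

lemma vals_t (w : ℂ) (hw : w ^ 3 = w ^ 2 + 5 * w + 4) (f : ℕ → ℂ) (h0 : f 0 = 1) (h1 : f 1 = w + 1)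
    (hf : ∀ n, f (n + 2) = w * f (n + 1) - f n) :
    f 0 = (0) * w ^ 2 + (0) * w + (1) ∧
    f 1 = (0) * w ^ 2 + (1) * w + (1) ∧
    f 2 = (1) * w ^ 2 + (1) * w + (-1) ∧
    f 3 = (2) * w ^ 2 + (3) * w + (3) ∧
    f 4 = (4) * w ^ 2 + (12) * w + (9) ∧
    f 5 = (14) * w ^ 2 + (26) * w + (13) ∧
    f 6 = (36) * w ^ 2 + (71) * w + (47) ∧
    f 7 = (93) * w ^ 2 + (201) * w + (131) := by
  have h2 : f 2 = (1) * w ^ 2 + (1) * w + (-1) := by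
    linear_combination hf 0 + w * h1 - h0 + (0) * hw
  have h3 : f 3 = (2) * w ^ 2 + (3) * w + (3) := by
    linear_combination hf 1 + w * h2 - h1 + (1) * hw
  have h4 : f 4 = (4) * w ^ 2 + (12) * w + (9) := by
    linear_combination hf 2 + w * h3 - h2 + (2) * hw
  have h5 : f 5 = (14) * w ^ 2 + (26) * w + (13) := by
    linear_combination hf 3 + w * h4 - h3 + (4) * hw
  have h6 : f 6 = (36) * w ^ 2 + (71) * w + (47) := by
    linear_combination hf 4 + w * h5 - h4 + (14) * hw
  have h7 : f 7 = (93) * w ^ 2 + (201) * w + (131) := by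
    linear_combination hf 5 + w * h6 - h5 + (36) * hw
  exact ⟨by rw [h0]; ring, by rw [h1]; ring, h2, h3, h4, h5, h6, h7⟩

/-- The order eight linear recurrence. -/
def Rec8 (u : ℕ → ℂ) : Prop :=
  ∀ n : ℕ, u n - 4 * u (n + 1) - u (n + 2) - 24 * u (n + 3) + 65 * u (n + 4)
      - 24 * u (n + 5) - u (n + 6) - 4 * u (n + 7) + u (n + 8) = 0

lemma rec8_ext (u v : ℕ → ℂ) (hu : Rec8 u) (hv : Rec8 v) (h0 : u 0 = v 0) (h1 : u 1 = v 1)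
    (h2 : u 2 = v 2) (h3 : u 3 = v 3) (h4 : u 4 = v 4) (h5 : u 5 = v 5) (h6 : u 6 = v 6)
    (h7 : u 7 = v 7) (n : ℕ) : u n = v n := by
  have key : ∀ n, u n = v n ∧ u (n + 1) = v (n + 1) ∧ u (n + 2) = v (n + 2) ∧
      u (n + 3) = v (n + 3) ∧ u (n + 4) = v (n + 4) ∧ u (n + 5) = v (n + 5) ∧
      u (n + 6) = v (n + 6) ∧ u (n + 7) = v (n + 7) := by
    intro n
    induction n with
    | zero => exact ⟨h0, h1, h2, h3, h4, h5, h6, h7⟩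
    | succ n ih =>
      obtain ⟨g0, g1, g2, g3, g4, g5, g6, g7⟩ := ih
      refine ⟨g1, g2, g3, g4, g5, g6, g7, ?_⟩
      change u (n + 8) = v (n + 8)
      linear_combination hu n - hv n - g0 + 4 * g1 + g2 + 24 * g3 - 65 * g4 + 24 * g5 + g6 + 4 * g7
  exact (key n).1

lemma geom_root (r₁ q₁ r₂ q₂ r₃ q₃ : ℂ) (h₁ : r₁ * q₁ = 1) (h₂ : r₂ * q₂ = 1) (h₃ : r₃ * q₃ = 1)
    (e1 : (r₁ + q₁) + (r₂ + q₂) + (r₃ + q₃) = 1)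
    (e2 : (r₁ + q₁) * (r₂ + q₂) + (r₁ + q₁) * (r₃ + q₃) + (r₂ + q₂) * (r₃ + q₃) = -5)
    (e3 : (r₁ + q₁) * (r₂ + q₂) * (r₃ + q₃) = 4) :
    Rec8 (fun n => r₁ ^ n * r₂ ^ n * r₃ ^ n) := by
  obtain ⟨p, hp⟩ : ∃ p, p = r₁ * r₂ + q₁ * q₂ := ⟨_, rfl⟩
  obtain ⟨m, hm⟩ : ∃ m, m = r₁ * q₂ + q₁ * r₂ := ⟨_, rfl⟩
  obtain ⟨w₁, hw₁⟩ : ∃ w, w = r₁ + q₁ := ⟨_, rfl⟩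
  obtain ⟨w₂, hw₂⟩ : ∃ w, w = r₂ + q₂ := ⟨_, rfl⟩
  obtain ⟨w₃, hw₃⟩ : ∃ w, w = r₃ + q₃ := ⟨_, rfl⟩
  rw [← hw₁, ← hw₂, ← hw₃] at e1 e2 e3
  have hpm1 : p + m = w₁ * w₂ := by rw [hp, hm, hw₁, hw₂]; ring
  have hpm2 : p * m = w₁ ^ 2 + w₂ ^ 2 - 4 := by
    rw [hp, hm, hw₁, hw₂]
    linear_combination (r₂ ^ 2 + q₂ ^ 2 - 2) * h₁ + (r₁ ^ 2 + q₁ ^ 2 - 2) * h₂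
  obtain ⟨t, ht⟩ : ∃ t, t = r₁ * r₂ * r₃ + q₁ * q₂ * q₃ := ⟨_, rfl⟩
  -- `t` is a root of a quadratic over `ℂ(p, w₃)`
  have hq : t ^ 2 - p * w₃ * t + (p ^ 2 + w₃ ^ 2 - 4) = 0 := by
    rw [ht, hp, hw₃]
    linear_combination (2 * r₂ * q₂ - r₂ * q₂ * (r₃ ^ 2 + q₃ ^ 2 )) * h₁
     + (2 - (r₃ ^ 2 + q₃ ^ 2)) * h₂
     + (-(r₁ * r₂) ^ 2 - (q₁ * q₂) ^ 2 + 2) * h₃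
  have S : w₁ ^ 2 + w₂ ^ 2 + w₃ ^ 2 = 11 := by
    linear_combination (w₁ + w₂ + w₃ + 1) * e1 - 2 * e2
  have P : w₁ ^ 2 * w₂ ^ 2 + w₁ ^ 2 * w₃ ^ 2 + w₂ ^ 2 * w₃ ^ 2 = 17 := by
    linear_combination (w₁ * w₂ + w₁ * w₃ + w₂ * w₃ - 5) * e2 - 2 * (w₁ + w₂ + w₃) * e3 - 8 * e1
  have hG : t ^ 4 - 4 * t ^ 3 - 5 * t ^ 2 - 12 * t + 69 = 0 := by
    have E1 : p * w₃ + m * w₃ = 4 := by linear_combination w₃ * hpm1 + e3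
    have E2 : (p ^ 2 + w₃ ^ 2 - 4) + (m ^ 2 + w₃ ^ 2 - 4) + p * w₃ * (m * w₃) = -5 := by
      linear_combination (p + m + w₁ * w₂) * hpm1 + (w₃ ^ 2 - 2) * hpm2 + P - 2 * S
    have E3 : (p ^ 2 + w₃ ^ 2 - 4) * (m * w₃) + (m ^ 2 + w₃ ^ 2 - 4) * (p * w₃) = 12 := by
      have : (p ^ 2 + w₃ ^ 2 - 4) * (m * w₃) + (m ^ 2 + w₃ ^ 2 - 4) * (p * w₃) =
        w₃ * (p + m) * (p * m + w₃ ^ 2 - 4) := by ring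
      rw [this, hpm1, hpm2]
      linear_combination (w₁ ^ 2 + w₂ ^ 2 + w₃ ^ 2 - 8) * e3 + 4 * S
    have E4 : (p ^ 2 + w₃ ^ 2 - 4) * (m ^ 2 + w₃ ^ 2 - 4) = 69 := by
      have : (p ^ 2 + w₃ ^ 2 - 4) * (m ^ 2 + w₃ ^ 2 - 4) =
        (p * m - (w₃ ^ 2 - 4)) ^ 2 + (w₃ ^ 2 - 4) * (p + m) ^ 2 := by ring
      rw [this, hpm1, hpm2]
      linear_combination (w₁ ^ 2 + w₂ ^ 2 + w₃ ^ 2 + 11) * S - 4 * P + (w₁ * w₂ * w₃ + 4) * e3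
    linear_combination (t ^ 2 - m * w₃ * t + (m ^ 2 + w₃ ^ 2 - 4)) * hq + t ^ 3 * E1 - t ^ 2 * E2
      + t * E3 - E4
  intro n
  have hx : (r₁ * r₂ * r₃) * (q₁ * q₂ * q₃) = 1 := by
    linear_combination r₂ * q₂ * r₃ * q₃ * h₁ + r₃ * q₃ * h₂ + h₃
  simp only [← mul_pow]
  generalize r₁ * r₂ * r₃ = x at *
  generalize q₁ * q₂ * q₃ = y at *
  have hxt : x * t = x ^ 2 + 1 := by rw [ht]; linear_combination hx
  have hF : 1 - 4 * x - x ^ 2 - 24 * x ^ 3 + 65 * x ^ 4 - 24 * x ^ 5 - x ^ 6 - 4 * x ^ 7 + x ^ 8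
      = 0 := by
    have h2 : x ^ 4 * (t ^ 4 - 4 * t ^ 3 - 5 * t ^ 2 - 12 * t + 69) = 
      (x * t) ^ 4 - 4 * x * (x * t) ^ 3 - 5 * x ^ 2 * (x * t) ^ 2 - 12 * x ^ 3 * (x * t)
        + 69 * x ^ 4 := by ring
    rw [hG, hxt] at h2
    linear_combination -h2
  linear_combination x ^ n * hF

/-- Products of three two-term exponential sequences satisfy the recurrence. -/
lemma rec8_prod (r₁ q₁ r₂ q₂ r₃ q₃ : ℂ) (h₁ : r₁ * q₁ = 1) (h₂ : r₂ * q₂ = 1) (h₃ : r₃ * q₃ = 1)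
    (e1 : (r₁ + q₁) + (r₂ + q₂) + (r₃ + q₃) = 1)
    (e2 : (r₁ + q₁) * (r₂ + q₂) + (r₁ + q₁) * (r₃ + q₃) + (r₂ + q₂) * (r₃ + q₃) = -5)
    (e3 : (r₁ + q₁) * (r₂ + q₂) * (r₃ + q₃) = 4) (A₁ B₁ A₂ B₂ A₃ B₃ : ℂ) :
    Rec8 (fun n => (A₁ * r₁ ^ n + B₁ * q₁ ^ n) * (A₂ * r₂ ^ n + B₂ * q₂ ^ n) *
      (A₃ * r₃ ^ n + B₃ * q₃ ^ n)) := by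
  have c₁ := add_comm r₁ q₁
  have c₂ := add_comm r₂ q₂
  have c₃ := add_comm r₃ q₃
  have k₁ := mul_comm r₁ q₁ ▸ h₁
  have k₂ := mul_comm r₂ q₂ ▸ h₂
  have k₃ := mul_comm r₃ q₃ ▸ h₃
  intro n
  have g1 := geom_root r₁ q₁ r₂ q₂ r₃ q₃ h₁ h₂ h₃ e1 e2 e3 n
  have g2 := geom_root r₁ q₁ r₂ q₂ q₃ r₃ h₁ h₂ k₃ (by rwa [c₃] at e1) (by rwa [c₃] at e2)
    (by rwa [c₃] at e3) n
  have g3 := geom_root r₁ q₁ q₂ r₂ r₃ q₃ h₁ k₂ h₃ (by rwa [c₂] at e1) (by rwa [c₂] at e2)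
    (by rwa [c₂] at e3) n
  have g4 := geom_root r₁ q₁ q₂ r₂ q₃ r₃ h₁ k₂ k₃ (by rwa [c₂, c₃] at e1) (by rwa [c₂, c₃] at e2)
    (by rwa [c₂, c₃] at e3) n
  have g5 := geom_root q₁ r₁ r₂ q₂ r₃ q₃ k₁ h₂ h₃ (by rwa [c₁] at e1) (by rwa [c₁] at e2)
    (by rwa [c₁] at e3) n
  have g6 := geom_root q₁ r₁ r₂ q₂ q₃ r₃ k₁ h₂ k₃ (by rwa [c₁, c₃] at e1) (by rwa [c₁, c₃] at e2)
    (by rwa [c₁, c₃] at e3) n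
  have g7 := geom_root q₁ r₁ q₂ r₂ r₃ q₃ k₁ k₂ h₃ (by rwa [c₁, c₂] at e1) (by rwa [c₁, c₂] at e2)
    (by rwa [c₁, c₂] at e3) n
  have g8 := geom_root q₁ r₁ q₂ r₂ q₃ r₃ k₁ k₂ k₃ (by rwa [c₁, c₂, c₃] at e1)
    (by rwa [c₁, c₂, c₃] at e2) (by rwa [c₁, c₂, c₃] at e3) n
  dsimp only at *
  linear_combination A₁ * A₂ * A₃ * g1 + A₁ * A₂ * B₃ * g2 + A₁ * B₂ * A₃ * g3 +
    A₁ * B₂ * B₃ * g4 + B₁ * A₂ * A₃ * g5 + B₁ * A₂ * B₃ * g6 + B₁ * B₂ * A₃ * g7 +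
    B₁ * B₂ * B₃ * g8

/-- The even-index sequence attached to `r`. -/
noncomputable def sq (r : ℂ) (n : ℕ) : ℂ :=
  (r - r⁻¹)⁻¹ * r ^ n + (-(r - r⁻¹)⁻¹) * r⁻¹ ^ n

/-- The odd-index sequence attached to `r`. -/
noncomputable def tq (r : ℂ) (n : ℕ) : ℂ :=
  ((r - 1)⁻¹ * r) * r ^ n + (-(r - 1)⁻¹) * r⁻¹ ^ n

lemma ne_of_cubic (r : ℂ) (h0 : r ≠ 0)
    (hw : (r + r⁻¹) ^ 3 = (r + r⁻¹) ^ 2 + 5 * (r + r⁻¹) + 4) : r - 1 ≠ 0 ∧ r - r⁻¹ ≠ 0 := by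
  have h1 : r - 1 ≠ 0 := by
    intro h
    rw [sub_eq_zero.1 h] at hw
    norm_num at hw
  refine ⟨h1, ?_⟩
  intro h
  have h2 : (r - 1) * (r + 1) = 0 := by
    have := mul_inv_cancel₀ h0
    linear_combination r * h + this
  rcases mul_eq_zero.1 h2 with h3 | h3
  · exact h1 h3
  · rw [eq_neg_of_add_eq_zero_left h3] at hw
    norm_num at hw

lemma sq_rec (r : ℂ) (h0 : r ≠ 0) (n : ℕ) :
    sq r (n + 2) = (r + r⁻¹) * sq r (n + 1) - sq r n := by
  unfold sq
  have := mul_inv_cancel₀ h0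
  linear_combination (-(r - r⁻¹)⁻¹ * (r ^ n - r⁻¹ ^ n)) * this

lemma tq_rec (r : ℂ) (h0 : r ≠ 0) (n : ℕ) :
    tq r (n + 2) = (r + r⁻¹) * tq r (n + 1) - tq r n := by
  unfold tq
  have := mul_inv_cancel₀ h0
  linear_combination (-(r - 1)⁻¹ * (r * r ^ n - r⁻¹ ^ n)) * this

lemma sq_zero (r : ℂ) : sq r 0 = 0 := by simp [sq]

lemma sq_one (r : ℂ) (h : r - r⁻¹ ≠ 0) : sq r 1 = 1 := by
  unfold sq
  have := inv_mul_cancel₀ h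
  linear_combination this

lemma tq_zero (r : ℂ) (h : r - 1 ≠ 0) : tq r 0 = 1 := by
  unfold tq
  have := inv_mul_cancel₀ h
  linear_combination this

lemma tq_one (r : ℂ) (h0 : r ≠ 0) (h : r - 1 ≠ 0) : tq r 1 = (r + r⁻¹) + 1 := by
  unfold tq
  field_simp
  ring

lemma even_factor (r : ℂ) (h0 : r ≠ 0) (h1 : r - 1 ≠ 0) (h2 : r - r⁻¹ ≠ 0) (n : ℕ) (hn : 1 ≤ n) :
    r⁻¹ ^ (2 * n - 1) * (∑ i ∈ Finset.range (2 * n), r ^ i) ^ 2 =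
      (r + r⁻¹ + 2) * sq r n ^ 2 := by
  have hg := geom_sum_mul r (2 * n)
  have hri := mul_inv_cancel₀ h0
  have hpow : r ^ n * r⁻¹ ^ n = 1 := by rw [← mul_pow, hri, one_pow]
  have hs : sq r n * (r - r⁻¹) = r ^ n - r⁻¹ ^ n := by
    unfold sq
    have := inv_mul_cancel₀ h2
    linear_combination (r ^ n - r⁻¹ ^ n) * this
  have hS : ∑ i ∈ Finset.range (2 * n), r ^ i = r ^ n * r⁻¹ * (r + 1) * sq r n := by
    apply mul_right_cancel₀ h1
    rw [hg, two_mul, pow_add]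
    linear_combination hpow - r ^ n * hs - r ^ n * r * sq r n * hri
  have hq : r⁻¹ ^ (2 * n - 1) * r⁻¹ = (r⁻¹ ^ n) ^ 2 := by
    rw [← pow_succ, ← pow_mul]
    congr 1
    omega
  rw [hS]
  linear_combination (r ^ n) ^ 2 * r⁻¹ * (r + 1) ^ 2 * sq r n ^ 2 * hq +
    r⁻¹ * (r + 1) ^ 2 * sq r n ^ 2 * (r ^ n * r⁻¹ ^ n + 1) * hpow + sq r n ^ 2 * (r + 2) * hri

lemma odd_factor (r : ℂ) (h0 : r ≠ 0) (h1 : r - 1 ≠ 0) (n : ℕ) :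
    r⁻¹ ^ (2 * n + 1 - 1) * (∑ i ∈ Finset.range (2 * n + 1), r ^ i) ^ 2 = tq r n ^ 2 := by
  have hg := geom_sum_mul r (2 * n + 1)
  have hri := mul_inv_cancel₀ h0
  have hpow : r ^ n * r⁻¹ ^ n = 1 := by rw [← mul_pow, hri, one_pow]
  have hs : tq r n * (r - 1) = r * r ^ n - r⁻¹ ^ n := by
    unfold tq
    have := inv_mul_cancel₀ h1
    linear_combination (r * r ^ n - r⁻¹ ^ n) * this
  have hS : ∑ i ∈ Finset.range (2 * n + 1), r ^ i = r ^ n * tq r n := by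
    apply mul_right_cancel₀ h1
    rw [hg, pow_succ, two_mul, pow_add]
    linear_combination hpow - r ^ n * hs
  rw [hS, Nat.add_sub_cancel, two_mul, pow_add]
  linear_combination (tq r n) ^ 2 * (r ^ n * r⁻¹ ^ n + 1) * hpow

end Seqs
end GP3

namespace GP3

lemma exists_rs : ∃ r₁ r₂ r₃ : ℂ, r₁ ≠ 0 ∧ r₂ ≠ 0 ∧ r₃ ≠ 0 ∧
    (r₁ + r₁⁻¹) + (r₂ + r₂⁻¹) + (r₃ + r₃⁻¹) = 1 ∧
    (r₁ + r₁⁻¹) * (r₂ + r₂⁻¹) + (r₁ + r₁⁻¹) * (r₃ + r₃⁻¹) + (r₂ + r₂⁻¹) * (r₃ + r₃⁻¹) = -5 ∧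
    (r₁ + r₁⁻¹) * (r₂ + r₂⁻¹) * (r₃ + r₃⁻¹) = 4 := by
  obtain ⟨w₁, w₂, w₃, e1, e2, e3⟩ := exists_ws
  obtain ⟨r₁, h₁, rfl⟩ := exists_inv_sum w₁
  obtain ⟨r₂, h₂, rfl⟩ := exists_inv_sum w₂
  obtain ⟨r₃, h₃, rfl⟩ := exists_inv_sum w₃
  exact ⟨r₁, r₂, r₃, h₁, h₂, h₃, e1, e2, e3⟩

lemma rec8_cast (a : ℕ → ℤ)
    (h : ∀ n : ℕ, a n - 4 * a (n + 1) - a (n + 2) - 24 * a (n + 3) + 65 * a (n + 4)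
      - 24 * a (n + 5) - a (n + 6) - 4 * a (n + 7) + a (n + 8) = 0) :
    Rec8 (fun n => (a n : ℂ)) := by
  intro n
  dsimp only
  exact_mod_cast h n

end GP3


/-- With `a, b : ℕ → ℤ` both satisfying the recurrence
`u(n) − 4u(n+1) − u(n+2) − 24u(n+3) + 65u(n+4) − 24u(n+5) − u(n+6) − 4u(n+7) + u(n+8) = 0`
and the given initial data, `τ(GP(2n,3)) = 12n·a(n)²` for `n ≥ 4` and
`τ(GP(2n+1,3)) = (2n+1)·b(n)²` for `n ≥ 3`. -/
theorem spanning_trees_GP3_recurrence (a b : ℕ → ℤ)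
    (hreca : ∀ n : ℕ, a n - 4 * a (n + 1) - a (n + 2) - 24 * a (n + 3) + 65 * a (n + 4)
      - 24 * a (n + 5) - a (n + 6) - 4 * a (n + 7) + a (n + 8) = 0)
    (hrecb : ∀ n : ℕ, b n - 4 * b (n + 1) - b (n + 2) - 24 * b (n + 3) + 65 * b (n + 4)
      - 24 * b (n + 5) - b (n + 6) - 4 * b (n + 7) + b (n + 8) = 0)
    (ha0 : a 0 = 0) (ha1 : a 1 = 1) (ha2 : a 2 = 4) (ha3 : a 3 = 9) (ha4 : a 4 = 72)
    (ha5 : a 5 = 320) (ha6 : a 6 = 1332) (ha7 : a 7 = 6889)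
    (hb0 : b 0 = 1) (hb1 : b 1 = 1) (hb2 : b 2 = 20) (hb3 : b 3 = 83) (hb4 : b 4 = 289)
    (hb5 : b 5 = 1693) (hb6 : b 6 = 7775) (hb7 : b 7 = 34820) :
    (∀ n : ℕ, 4 ≤ n →
      (numSpanningTrees (genPetersen (2 * n) 3) : ℤ) = 12 * n * a n ^ 2) ∧
    (∀ n : ℕ, 3 ≤ n →
      (numSpanningTrees (genPetersen (2 * n + 1) 3) : ℤ) = (2 * n + 1) * b n ^ 2) := by
  obtain ⟨r₁, r₂, r₃, h₁, h₂, h₃, e1, e2, e3⟩ := GP3.exists_rs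
  obtain ⟨k₁, k₂, k₃⟩ := GP3.cubic_of _ _ _ e1 e2 e3
  obtain ⟨d₁, d₁'⟩ := GP3.ne_of_cubic r₁ h₁ k₁
  obtain ⟨d₂, d₂'⟩ := GP3.ne_of_cubic r₂ h₂ k₂
  obtain ⟨d₃, d₃'⟩ := GP3.ne_of_cubic r₃ h₃ k₃
  have hnorm := GP3.norm_quad _ _ _ e1 e2 e3
  have ha : ∀ n, (a n : ℂ) = GP3.sq r₁ n * GP3.sq r₂ n * GP3.sq r₃ n := by
    obtain ⟨x0, x1, x2, x3, x4, x5, x6, x7⟩ := GP3.vals_s _ k₁ (GP3.sq r₁) (GP3.sq_zero r₁)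
      (GP3.sq_one r₁ d₁') (GP3.sq_rec r₁ h₁)
    obtain ⟨y0, y1, y2, y3, y4, y5, y6, y7⟩ := GP3.vals_s _ k₂ (GP3.sq r₂) (GP3.sq_zero r₂)
      (GP3.sq_one r₂ d₂') (GP3.sq_rec r₂ h₂)
    obtain ⟨z0, z1, z2, z3, z4, z5, z6, z7⟩ := GP3.vals_s _ k₃ (GP3.sq r₃) (GP3.sq_zero r₃)
      (GP3.sq_one r₃ d₃') (GP3.sq_rec r₃ h₃)
    refine GP3.rec8_ext (fun n => (a n : ℂ))
      (fun n => GP3.sq r₁ n * GP3.sq r₂ n * GP3.sq r₃ n) (GP3.rec8_cast a hreca)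
      (GP3.rec8_prod _ _ _ _ _ _ (mul_inv_cancel₀ h₁) (mul_inv_cancel₀ h₂) (mul_inv_cancel₀ h₃)
        e1 e2 e3 _ _ _ _ _ _) ?_ ?_ ?_ ?_ ?_ ?_ ?_ ?_
    · rw [x0, y0, z0, hnorm, ha0]; norm_num
    · rw [x1, y1, z1, hnorm, ha1]; norm_num
    · rw [x2, y2, z2, hnorm, ha2]; norm_num
    · rw [x3, y3, z3, hnorm, ha3]; norm_num
    · rw [x4, y4, z4, hnorm, ha4]; norm_num
    · rw [x5, y5, z5, hnorm, ha5]; norm_num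
    · rw [x6, y6, z6, hnorm, ha6]; norm_num
    · rw [x7, y7, z7, hnorm, ha7]; norm_num
  have hb : ∀ n, (b n : ℂ) = GP3.tq r₁ n * GP3.tq r₂ n * GP3.tq r₃ n := by
    obtain ⟨x0, x1, x2, x3, x4, x5, x6, x7⟩ := GP3.vals_t _ k₁ (GP3.tq r₁) (GP3.tq_zero r₁ d₁)
      (GP3.tq_one r₁ h₁ d₁) (GP3.tq_rec r₁ h₁)
    obtain ⟨y0, y1, y2, y3, y4, y5, y6, y7⟩ := GP3.vals_t _ k₂ (GP3.tq r₂) (GP3.tq_zero r₂ d₂)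
      (GP3.tq_one r₂ h₂ d₂) (GP3.tq_rec r₂ h₂)
    obtain ⟨z0, z1, z2, z3, z4, z5, z6, z7⟩ := GP3.vals_t _ k₃ (GP3.tq r₃) (GP3.tq_zero r₃ d₃)
      (GP3.tq_one r₃ h₃ d₃) (GP3.tq_rec r₃ h₃)
    refine GP3.rec8_ext (fun n => (b n : ℂ))
      (fun n => GP3.tq r₁ n * GP3.tq r₂ n * GP3.tq r₃ n) (GP3.rec8_cast b hrecb)
      (GP3.rec8_prod _ _ _ _ _ _ (mul_inv_cancel₀ h₁) (mul_inv_cancel₀ h₂) (mul_inv_cancel₀ h₃)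
        e1 e2 e3 _ _ _ _ _ _) ?_ ?_ ?_ ?_ ?_ ?_ ?_ ?_
    · rw [x0, y0, z0, hnorm, hb0]; norm_num
    · rw [x1, y1, z1, hnorm, hb1]; norm_num
    · rw [x2, y2, z2, hnorm, hb2]; norm_num
    · rw [x3, y3, z3, hnorm, hb3]; norm_num
    · rw [x4, y4, z4, hnorm, hb4]; norm_num
    · rw [x5, y5, z5, hnorm, hb5]; norm_num
    · rw [x6, y6, z6, hnorm, hb6]; norm_num
    · rw [x7, y7, z7, hnorm, hb7]; norm_num
  constructor
  · intro n hn
    have : NeZero (2 * n) := ⟨by omega⟩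
    have hτ := GP3.tau_formula (2 * n) (by omega) r₁ r₂ r₃ h₁ h₂ h₃ e1 e2 e3
    rw [GP3.even_factor r₁ h₁ d₁ d₁' n (by omega), GP3.even_factor r₂ h₂ d₂ d₂' n (by omega),
      GP3.even_factor r₃ h₃ d₃ d₃' n (by omega)] at hτ
    have h6 : (r₁ + r₁⁻¹ + 2) * (r₂ + r₂⁻¹ + 2) * (r₃ + r₃⁻¹ + 2) = 6 := by
      linear_combination e3 + 2 * e2 + 4 * e1
    have hfin : (numSpanningTrees (genPetersen (2 * n) 3) : ℂ) = 12 * n * (a n : ℂ) ^ 2 := by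
      rw [hτ, ha n]
      push_cast
      linear_combination 2 * n * (GP3.sq r₁ n * GP3.sq r₂ n * GP3.sq r₃ n) ^ 2 * h6
    exact_mod_cast hfin
  · intro n hn
    have hτ := GP3.tau_formula (2 * n + 1) (by omega) r₁ r₂ r₃ h₁ h₂ h₃ e1 e2 e3
    rw [GP3.odd_factor r₁ h₁ d₁ n, GP3.odd_factor r₂ h₂ d₂ n, GP3.odd_factor r₃ h₃ d₃ n] at hτ
    have hfin : (numSpanningTrees (genPetersen (2 * n + 1) 3) : ℂ) =
        (2 * n + 1) * (b n : ℂ) ^ 2 := by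
      rw [hτ, hb n]
      push_cast
      ring
    exact_mod_cast hfin
end

section
/- Let n ≥ 9 be an integer and suppose w_1, w_2, w_3, w_4 ∈ ℂ are the roots (with multiplicity) of 16X⁴ − 8X³ − 24X² − 1, i.e. 16X⁴ − 8X³ − 24X² − 1 = 16(X − w_1)(X − w_2)(X − w_3)(X − w_4). Then τ(GP(n,4)) = (−1)^{n−1} · n · ∏_{s=1}^{4} (T_n(w_s) − 1)/(w_s − 1), as an equality in ℂ with τ(GP(n,4)) cast to ℂ. -/
open Polynomial

section MatrixTree

set_option linter.unusedSectionVars false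

variable {V : Type*} [Fintype V] [DecidableEq V]

/-- `f` is a good pointer function towards the root `r`. -/
def Good (r : V) (f : V → V) : Prop := f r = r ∧ ∀ i, ∃ k, f^[k] i = r

/-- the matrix attached to a pointer function -/
def ptrRow (r : V) (i j : V) : V → ℂ :=
  if i = r then Pi.single r 1 else Pi.single i 1 - Pi.single j 1

lemma good_induct {r : V} {f : V → V} (hf : Good r f) (P : V → Prop) (h0 : P r)
    (hs : ∀ i, i ≠ r → P (f i) → P i) (i : V) : P i := by
  obtain ⟨k, hk⟩ := hf.2 i
  induction k generalizing i with
  | zero => simp at hk; exact hk ▸ h0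
  | succ k ih =>
    by_cases hi : i = r
    · exact hi ▸ h0
    · exact hs i hi (ih _ (by simpa using hk))

lemma good_height {r : V} {f : V → V} (hf : Good r f) :
    ∃ h : V → ℕ, ∀ i, i ≠ r → h (f i) < h i := by
  classical
  refine ⟨fun i => Nat.find (hf.2 i), fun i hi => ?_⟩
  have hs := Nat.find_spec (hf.2 i)
  rcases hk : Nat.find (hf.2 i) with _ | k
  · rw [hk] at hs; exact absurd hs hi
  · rw [hk] at hs
    have : Nat.find (hf.2 (f i)) ≤ k := Nat.find_min' _ (by simpa using hs)
    simp only [hk]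
    omega

lemma det_good {r : V} {f : V → V} (hf : Good r f) :
    Matrix.det (Matrix.of fun i => ptrRow r i (f i)) = 1 := by
  obtain ⟨h, hh⟩ := good_height hf
  have hT : Matrix.BlockTriangular (Matrix.of fun i => ptrRow r i (f i))
      (fun i => OrderDual.toDual (h i)) := by
    intro i j hij
    have hij' : h i < h j := hij
    have h1 : j ≠ i := by rintro rfl; exact lt_irrefl _ hij'
    simp only [Matrix.of_apply, ptrRow]
    split_ifs with hi
    · subst hi; simp [h1]
    · have h2 : j ≠ f i := by
        rintro rfl
        exact absurd (hh i hi) (by omega)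
      simp [h1, h2]
  rw [hT.det]
  apply Finset.prod_eq_one
  intro a _
  refine (congrArg Matrix.det ?_).trans (Matrix.det_one (R := ℂ))
  ext ⟨i, hi⟩ ⟨j, hj⟩
  simp only [Matrix.toSquareBlock_def, Matrix.of_apply, ptrRow, Matrix.one_apply, Subtype.mk.injEq]
  split_ifs with hir hij hij
  · subst hij; subst hir; simp
  · subst hir; simp [Ne.symm hij]
  · subst hij
    have : i ≠ f i := by
      intro h'; have := hh i hir; rw [← h'] at this; exact lt_irrefl _ this
    simp [this]
  · have : j ≠ f i := by
      rintro rfl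
      have h3 := hh i hir
      have : h i = h (f i) := OrderDual.toDual.injective (hi.trans hj.symm)
      omega
    simp [this, Ne.symm hij]

lemma det_bad {r : V} {f : V → V} (hr : f r = r) (hf : ¬ Good r f) :
    Matrix.det (Matrix.of fun i => ptrRow r i (f i)) = 0 := by
  classical
  have hb : ∃ i, ∀ k, f^[k] i ≠ r := by
    by_contra hcon
    push Not at hcon
    exact hf ⟨hr, hcon⟩
  obtain ⟨i0, hi0⟩ := hb
  apply Matrix.exists_mulVec_eq_zero_iff.mp
  refine ⟨fun i => if ∃ k, f^[k] i = r then 0 else 1, ?_, ?_⟩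
  · intro h
    have := congrFun h i0
    simp [hi0] at this
  · ext i
    simp only [Matrix.mulVec, Matrix.of_apply, ptrRow, Pi.zero_apply]
    split_ifs with hi
    · subst hi
      simp only [single_dotProduct, one_mul]
      exact if_pos ⟨0, rfl⟩
    · have : (∃ k, f^[k] i = r) ↔ ∃ k, f^[k] (f i) = r := by
        constructor
        · rintro ⟨k, hk⟩
          rcases k with _ | k
          · exact absurd hk hi
          · exact ⟨k, by simpa using hk⟩
        · rintro ⟨k, hk⟩
          exact ⟨k + 1, by simpa using hk⟩
      rw [sub_dotProduct]
      simp only [single_dotProduct, one_mul, this, sub_self]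

/-- The tree attached to a pointer function. -/
def ptrGraph (f : V → V) : SimpleGraph V := SimpleGraph.fromRel fun i j => f i = j

lemma ptrGraph_adj (f : V → V) (i j : V) :
    (ptrGraph f).Adj i j ↔ i ≠ j ∧ (f i = j ∨ f j = i) := by
  simp [ptrGraph]

lemma good_ne {r : V} {f : V → V} (hf : Good r f) {i : V} (hi : i ≠ r) : f i ≠ i := by
  obtain ⟨h, hh⟩ := good_height hf
  intro h'
  have := hh i hi
  rw [h'] at this
  exact lt_irrefl _ this

lemma ptrGraph_connected {r : V} {f : V → V} (hf : Good r f) : (ptrGraph f).Connected := by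
  have hreach : ∀ i, (ptrGraph f).Reachable i r := by
    apply good_induct hf
    · exact SimpleGraph.Reachable.refl _
    · intro i hi h
      refine SimpleGraph.Reachable.trans (SimpleGraph.Adj.reachable ?_) h
      rw [ptrGraph_adj]
      exact ⟨(good_ne hf hi).symm, Or.inl rfl⟩
  have : Nonempty V := ⟨r⟩
  exact SimpleGraph.Connected.mk fun u v => (hreach u).trans (hreach v).symm

lemma ptrGraph_isTree {r : V} {f : V → V} (hf : Good r f) : (ptrGraph f).IsTree := by
  classical
  have hc := ptrGraph_connected hf
  rw [SimpleGraph.isTree_iff_connected_and_card]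
  refine ⟨hc, le_antisymm ?_ hc.card_vert_le_card_edgeSet_add_one⟩
  have hsub : (ptrGraph f).edgeSet ⊆
      (((Finset.univ.erase r).image fun i => s(i, f i) : Finset (Sym2 V)) : Set (Sym2 V)) := by
    intro e
    induction e using Sym2.ind with
    | _ i j =>
      rw [SimpleGraph.mem_edgeSet, ptrGraph_adj]
      rintro ⟨hij, h | h⟩
      · simp only [Finset.coe_image, Set.mem_image, Finset.mem_coe, Finset.mem_erase,
          Finset.mem_univ, and_true]
        refine ⟨i, ?_, by rw [h]⟩
        rintro rfl
        exact hij (hf.1.symm.trans h)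
      · simp only [Finset.coe_image, Set.mem_image, Finset.mem_coe, Finset.mem_erase,
          Finset.mem_univ, and_true]
        refine ⟨j, ?_, by rw [h, Sym2.eq_swap]⟩
        rintro rfl
        exact hij (h.symm.trans hf.1)
  have h1 := Set.ncard_le_ncard hsub (Finset.finite_toSet _)
  rw [Set.ncard_coe_finset] at h1
  have h2 : ((Finset.univ.erase r).image fun i => s(i, f i)).card ≤ Fintype.card V - 1 := by
    refine Finset.card_image_le.trans ?_
    rw [Finset.card_erase_of_mem (Finset.mem_univ _), Finset.card_univ]
  have h3 : 0 < Fintype.card V := Fintype.card_pos_iff.mpr ⟨r⟩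
  rw [Nat.card_coe_set_eq, Nat.card_eq_fintype_card]
  omega

lemma ptrGraph_inj {r : V} {f g : V → V} (hf : Good r f) (hg : Good r g)
    (h : ptrGraph f = ptrGraph g) : f = g := by
  have hadj : ∀ i j, i ≠ j → ((f i = j ∨ f j = i) ↔ (g i = j ∨ g j = i)) := by
    intro i j hij
    have := congrArg (fun G => SimpleGraph.Adj G i j) h
    simpa [ptrGraph_adj, hij] using this
  funext i
  refine good_induct hg (fun i => f i = g i) (hf.1.trans hg.1.symm) ?_ i
  intro i hi hgi
  by_contra hne
  have hgne := good_ne hg hi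
  have h1 := (hadj i (g i) hgne.symm).mpr (Or.inl rfl)
  rcases h1 with h1 | h1
  · exact hne h1
  · obtain ⟨ht, hht⟩ := good_height hg
    have hgr : g i ≠ r := by
      intro h'
      rw [h', hf.1] at h1
      exact hi h1.symm
    have := hht (g i) hgr
    rw [← hgi, h1] at this
    have := hht i hi
    omega

lemma exists_ptr (r : V) {T : SimpleGraph V} (hT : T.IsTree) :
    ∃ f, Good r f ∧ ptrGraph f = T := by
  classical
  have hc := hT.connected
  have hstep : ∀ i, ∃ j, (i = r → j = r) ∧ (i ≠ r → T.Adj i j ∧ T.dist j r < T.dist i r) := by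
    intro i
    by_cases hi : i = r
    · exact ⟨r, fun _ => rfl, fun h => absurd hi h⟩
    · obtain ⟨p, hp⟩ := hc.exists_walk_length_eq_dist i r
      cases p with
      | nil => exact absurd rfl hi
      | cons hadj q =>
        rename_i j
        refine ⟨j, fun h => absurd h hi, fun _ => ⟨hadj, ?_⟩⟩
        have := SimpleGraph.dist_le q
        rw [SimpleGraph.Walk.length_cons] at hp
        omega
  choose f hf0 hf1 using hstep
  have hgood : Good r f := by
    refine ⟨hf0 r rfl, ?_⟩
    have : ∀ m i, T.dist i r ≤ m → ∃ k, f^[k] i = r := by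
      intro m
      induction m with
      | zero =>
        intro i hi
        exact ⟨0, hc.dist_eq_zero_iff.mp (Nat.le_zero.mp hi)⟩
      | succ m ih =>
        intro i hi
        by_cases hir : i = r
        · exact ⟨0, hir⟩
        · obtain ⟨k, hk⟩ := ih (f i) (by have := (hf1 i hir).2; omega)
          exact ⟨k + 1, by simpa using hk⟩
    exact fun i => this _ i le_rfl
  refine ⟨f, hgood, ?_⟩
  have hle : ptrGraph f ≤ T := by
    intro i j hij
    rw [ptrGraph_adj] at hij
    obtain ⟨hne, h | h⟩ := hij
    · have hi : i ≠ r := by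
        rintro rfl
        exact hne (hgood.1.symm.trans h)
      exact h ▸ (hf1 i hi).1
    · have hj : j ≠ r := by
        rintro rfl
        exact hne (h.symm.trans hgood.1)
      exact (h ▸ (hf1 j hj).1).symm
  have hmin := SimpleGraph.isTree_iff_minimal_connected.mp hT
  exact le_antisymm hle (hmin.2 (ptrGraph_connected hgood) hle)

lemma numSpanningTrees_eq (G : SimpleGraph V) :
    numSpanningTrees G = Nat.card {T : SimpleGraph V // T ≤ G ∧ T.IsTree} := by
  unfold numSpanningTrees
  refine Nat.card_congr ⟨fun H => ⟨H.1.spanningCoe, H.1.spanningCoe_le, ?_⟩,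
    fun T => ⟨SimpleGraph.toSubgraph T.1 T.2.1, SimpleGraph.toSubgraph.isSpanning _ _, ?_⟩, ?_, ?_⟩
  · exact (H.1.spanningCoeEquivCoeOfSpanning H.2.1).isTree_iff.mpr H.2.2
  · refine (SimpleGraph.Subgraph.spanningCoeEquivCoeOfSpanning _
      (SimpleGraph.toSubgraph.isSpanning _ _)).isTree_iff.mp ?_
    exact T.2.2
  · rintro ⟨H, h1, h2⟩
    apply Subtype.ext
    apply SimpleGraph.Subgraph.ext
    · exact (SimpleGraph.Subgraph.isSpanning_iff.mp h1).symm
    · rfl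
  · rintro ⟨T, h⟩
    rfl

lemma card_good (G : SimpleGraph V) (r : V) :
    Nat.card {f : V → V // Good r f ∧ ∀ i, i ≠ r → G.Adj i (f i)} = numSpanningTrees G := by
  rw [numSpanningTrees_eq]
  refine Nat.card_congr (Equiv.ofBijective
    (fun f => ⟨ptrGraph f.1, ?_, ptrGraph_isTree f.2.1⟩) ⟨?_, ?_⟩)
  · intro i j hij
    rw [ptrGraph_adj] at hij
    obtain ⟨hne, h | h⟩ := hij
    · have hi : i ≠ r := by
        rintro rfl
        exact hne (f.2.1.1.symm.trans h)
      exact h ▸ (f.2.2 i hi)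
    · have hj : j ≠ r := by
        rintro rfl
        exact hne (h.symm.trans f.2.1.1)
      exact (h ▸ (f.2.2 j hj)).symm
  · rintro ⟨f, hf⟩ ⟨g, hg⟩ h
    exact Subtype.ext (ptrGraph_inj hf.1 hg.1 (congrArg Subtype.val h))
  · rintro ⟨T, hT⟩
    obtain ⟨f, hf, hfT⟩ := exists_ptr r hT.2
    refine ⟨⟨f, hf, fun i hi => hT.1 ?_⟩, Subtype.ext hfT⟩
    rw [← hfT, ptrGraph_adj]
    exact ⟨(good_ne hf hi).symm, Or.inl rfl⟩

theorem matrix_tree (G : SimpleGraph V) [DecidableRel G.Adj] (r : V) :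
    ((G.lapMatrix ℂ).updateRow r (Pi.single r 1)).det = (numSpanningTrees G : ℂ) := by
  classical
  let A : V → Finset V := fun i => if i = r then {r} else G.neighborFinset i
  have hrow : (G.lapMatrix ℂ).updateRow r (Pi.single r 1) =
      Matrix.of fun i => ∑ j ∈ A i, ptrRow r i j := by
    ext i j
    rw [Matrix.of_apply, Finset.sum_apply]
    by_cases hi : i = r
    · subst hi
      simp [A, ptrRow]
    · rw [Matrix.updateRow_ne hi]
      simp only [A, ptrRow, if_neg hi, Pi.sub_apply, Finset.sum_sub_distrib, SimpleGraph.lapMatrix,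
        SimpleGraph.degMatrix, Matrix.sub_apply, Finset.sum_const, SimpleGraph.card_neighborFinset_eq_degree]
      congr 1
      · by_cases hij : i = j
        · subst hij; simp
        · simp [hij, Ne.symm hij]
      · simp [Pi.single_apply, SimpleGraph.adjMatrix_apply]
  have hexp : (Matrix.of fun i => ∑ j ∈ A i, ptrRow r i j).det =
      ∑ f ∈ Fintype.piFinset A, (Matrix.of fun i => ptrRow r i (f i)).det :=
    (Matrix.detRowAlternating (R := ℂ) (n := V)).toMultilinearMap.map_sum_finset
      (fun i j => ptrRow r i j) A
  rw [hrow, hexp, ← card_good G r, Nat.card_eq_fintype_card, Fintype.card_subtype,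
    Finset.card_eq_sum_ones, Nat.cast_sum, Finset.sum_filter]
  rw [← Finset.sum_subset (Finset.subset_univ (Fintype.piFinset A))]
  · refine Finset.sum_congr rfl fun f hf => ?_
    rw [Fintype.mem_piFinset] at hf
    have hr : f r = r := by simpa [A] using hf r
    have hadj : ∀ i, i ≠ r → G.Adj i (f i) := by
      intro i hi
      simpa [A, hi] using hf i
    by_cases hg : Good r f
    · rw [det_good hg, if_pos ⟨hg, hadj⟩]; simp
    · rw [det_bad hr hg, if_neg (fun h => hg h.1)]
  · intro f _ hf
    rw [if_neg]
    rintro ⟨hg, hadj⟩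
    apply hf
    rw [Fintype.mem_piFinset]
    intro i
    by_cases hi : i = r
    · subst hi; simp [A, hg.1]
    · simpa [A, hi] using hadj i hi

theorem det_lap_add_ones (G : SimpleGraph V) [DecidableRel G.Adj] (r : V) :
    (G.lapMatrix ℂ + Matrix.of fun _ _ => 1).det =
      (Fintype.card V : ℂ) ^ 2 * (numSpanningTrees G : ℂ) := by
  classical
  set L := G.lapMatrix ℂ with hL
  set N : ℂ := (Fintype.card V : ℂ) with hN
  have hrowsum : ∀ i, ∑ j, L i j = 0 := by
    intro i
    have := congrFun (G.lapMatrix_mulVec_const_eq_zero (R := ℂ)) i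
    simpa [Matrix.mulVec, dotProduct] using this
  have hcolsum : ∀ j, ∑ i, L i j = 0 := by
    intro j
    rw [← hrowsum j]
    refine Finset.sum_congr rfl fun i _ => ?_
    exact (G.isSymm_lapMatrix (R := ℂ)).apply j i
  set J : Matrix V V ℂ := Matrix.of fun _ _ => 1 with hJ
  set B := L.updateRow r (fun _ => 1) with hB
  have h1 : (L + J).det = N * ((L + J).updateRow r (fun _ => 1)).det := by
    have := Matrix.det_updateRow_sum (L + J) r (fun _ => 1)
    rw [one_smul] at this
    rw [← this, ← Matrix.det_updateRow_smul]
    congr 2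
    ext j
    refine (Finset.sum_apply j Finset.univ _).trans ?_
    simp [Finset.sum_add_distrib, hcolsum, hJ, hN]
  have h2 : ((L + J).updateRow r (fun _ => 1)).det = B.det := by
    refine Matrix.det_eq_of_forall_row_eq_smul_add_const (fun i => if i = r then 0 else 1) r
      (by simp) ?_
    intro i j
    by_cases hi : i = r
    · subst hi; simp [hB]
    · simp [hB, hi, Matrix.updateRow_ne, hJ]
  have h3 : B.det = N * (B.updateCol r (Pi.single r 1)).det := by
    have := Matrix.det_updateCol_sum B r (fun _ => 1)
    rw [one_smul] at this
    rw [← this, ← Matrix.det_updateCol_smul]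
    congr 2
    ext i
    by_cases hi : i = r
    · subst hi; simp [hB, hN]
    · simp [hB, hi, Matrix.updateRow_ne, hrowsum]
  set E := (L.updateRow r (Pi.single r 1)).updateCol r (Pi.single r 1) with hE
  have h4 : (B.updateCol r (Pi.single r 1)).det = E.det := by
    rw [← Matrix.det_transpose, ← Matrix.det_transpose E]
    refine Matrix.det_eq_of_forall_row_eq_smul_add_const (fun i => if i = r then 0 else 1) r
      (by simp) ?_
    intro i j
    by_cases hi : i = r
    · subst hi; simp [hE, hB]
    · by_cases hj : j = r
      · subst hj; simp [hE, hB, hi]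
      · simp [hE, hB, hi, hj]
  have h5 : (L.updateRow r (Pi.single r 1)).det = E.det := by
    refine Matrix.det_eq_of_forall_row_eq_smul_add_const (fun i => if i = r then 0 else L i r) r
      (by simp) ?_
    intro i j
    by_cases hi : i = r
    · subst hi
      by_cases hj : j = i
      · subst hj; simp [hE]
      · simp [hE, hj]
    · by_cases hj : j = r
      · subst hj; simp [hE, hi]
      · simp [hE, hi, hj]
  rw [h1, h2, h3, h4, ← h5, matrix_tree]
  ring

end MatrixTree

section Fourier

lemma det_fromBlocks_diagonal {ι : Type*} [Fintype ι] [DecidableEq ι] (a b c d : ι → ℂ) :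
    (Matrix.fromBlocks (Matrix.diagonal a) (Matrix.diagonal b) (Matrix.diagonal c)
      (Matrix.diagonal d)).det = ∏ k, (a k * d k - b k * c k) := by
  have h : ∏ k, (a k * d k - b k * c k) = ∏ k, (!![a k, b k; c k, d k]).det := by
    refine Finset.prod_congr rfl fun k _ => ?_
    rw [Matrix.det_fin_two_of]
  rw [h, ← Matrix.det_blockDiagonal]
  let e : Fin 2 × ι ≃ ι ⊕ ι :=
    (Equiv.prodCongr finTwoEquiv (Equiv.refl ι)).trans (Equiv.boolProdEquivSum ι)
  rw [← Matrix.det_submatrix_equiv_self e]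
  congr 1
  ext ⟨i, k⟩ ⟨j, l⟩
  fin_cases i <;> fin_cases j <;>
    simp [e, Matrix.blockDiagonal_apply, Matrix.diagonal_apply, finTwoEquiv,
      Equiv.boolProdEquivSum]

variable {n : ℕ} [NeZero n]

/-- circulant block -/
def circ (n : ℕ) (s : ZMod n) : Matrix (ZMod n) (ZMod n) ℂ := Matrix.of fun i j =>
  (if j = i then 3 else 0) - (if j = i + s then 1 else 0) - (if j = i - s then 1 else 0) + 1

/-- off-diagonal block -/
def offd (n : ℕ) : Matrix (ZMod n) (ZMod n) ℂ := Matrix.of fun i j =>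
  1 - (if j = i then 1 else 0)

/-- Fourier matrix -/
def four (ψ : AddChar (ZMod n) ℂ) : Matrix (ZMod n) (ZMod n) ℂ := Matrix.of fun i k => ψ (i * k)

lemma sum_char {ψ : AddChar (ZMod n) ℂ} (hψ : ψ.IsPrimitive) (k : ZMod n) :
    ∑ j, ψ (j * k) = if k = 0 then (n : ℂ) else 0 := by
  have := AddChar.sum_mulShift k hψ
  rw [ZMod.card] at this
  rw [this]
  split_ifs <;> simp

lemma circ_mul {ψ : AddChar (ZMod n) ℂ} (hψ : ψ.IsPrimitive) (s : ZMod n) :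
    circ n s * four ψ = four ψ * Matrix.diagonal
      (fun k => 3 - ψ (s * k) - ψ (-(s * k)) + if k = 0 then (n : ℂ) else 0) := by
  ext i k
  rw [Matrix.mul_diagonal, Matrix.mul_apply]
  simp only [circ, four, Matrix.of_apply, add_mul, sub_mul, ite_mul, zero_mul, one_mul,
    Finset.sum_add_distrib, Finset.sum_sub_distrib, Finset.sum_ite_eq', Finset.mem_univ, if_true,
    Finset.sum_ite_eq, sum_char hψ]
  rw [sub_eq_add_neg (i * k), AddChar.map_add_eq_mul, AddChar.map_add_eq_mul]
  split_ifs with hk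
  · subst hk; simp
  · ring

lemma offd_mul {ψ : AddChar (ZMod n) ℂ} (hψ : ψ.IsPrimitive) :
    offd n * four ψ = four ψ * Matrix.diagonal
      (fun k => -1 + if k = 0 then (n : ℂ) else 0) := by
  ext i k
  rw [Matrix.mul_diagonal, Matrix.mul_apply]
  simp only [offd, four, Matrix.of_apply, add_mul, sub_mul, ite_mul, zero_mul, one_mul,
    Finset.sum_add_distrib, Finset.sum_sub_distrib, Finset.sum_ite_eq', Finset.mem_univ, if_true,
    Finset.sum_ite_eq, sum_char hψ]
  split_ifs with hk
  · subst hk; simp; ring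
  · ring

lemma four_det_ne {ψ : AddChar (ZMod n) ℂ} (hψ : ψ.IsPrimitive) : (four ψ).det ≠ 0 := by
  have h : four ψ * (Matrix.of fun k j => ψ (-(k * j))) = (n : ℂ) • (1 : Matrix _ _ ℂ) := by
    ext i j
    rw [Matrix.mul_apply]
    have : ∀ k, four ψ i k * (Matrix.of fun k j => ψ (-(k * j))) k j = ψ (k * (i - j)) := by
      intro k
      simp only [four, Matrix.of_apply]
      rw [← AddChar.map_add_eq_mul]
      congr 1
      ring
    simp only [this, sum_char hψ, Matrix.smul_apply, Matrix.one_apply, sub_eq_zero, smul_eq_mul,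
      mul_ite, mul_one, mul_zero]
  intro h0
  have h2 := congrArg Matrix.det h
  rw [Matrix.det_mul, h0, zero_mul, Matrix.det_smul, Matrix.det_one, mul_one] at h2
  exact pow_ne_zero _ (Nat.cast_ne_zero.mpr (NeZero.ne n)) h2.symm

lemma det_blocks {ψ : AddChar (ZMod n) ℂ} (hψ : ψ.IsPrimitive) (s t : ZMod n) :
    (Matrix.fromBlocks (circ n s) (offd n) (offd n) (circ n t)).det =
    ∏ k, ((3 - ψ (s * k) - ψ (-(s * k)) + if k = 0 then (n : ℂ) else 0) *
      (3 - ψ (t * k) - ψ (-(t * k)) + if k = 0 then (n : ℂ) else 0) -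
      (-1 + if k = 0 then (n : ℂ) else 0) * (-1 + if k = 0 then (n : ℂ) else 0)) := by
  rw [← det_fromBlocks_diagonal (fun k => (3 - ψ (s * k) - ψ (-(s * k)) + if k = 0 then (n : ℂ) else 0))
    (fun k => -1 + if k = 0 then (n : ℂ) else 0) (fun k => -1 + if k = 0 then (n : ℂ) else 0)
    (fun k => (3 - ψ (t * k) - ψ (-(t * k)) + if k = 0 then (n : ℂ) else 0))]
  have h : Matrix.fromBlocks (circ n s) (offd n) (offd n) (circ n t) *
      Matrix.fromBlocks (four ψ) 0 0 (four ψ) = Matrix.fromBlocks (four ψ) 0 0 (four ψ) *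
      Matrix.fromBlocks
        (Matrix.diagonal fun k => (3 - ψ (s * k) - ψ (-(s * k)) + if k = 0 then (n : ℂ) else 0))
        (Matrix.diagonal fun k => -1 + if k = 0 then (n : ℂ) else 0)
        (Matrix.diagonal fun k => -1 + if k = 0 then (n : ℂ) else 0)
        (Matrix.diagonal fun k => (3 - ψ (t * k) - ψ (-(t * k)) + if k = 0 then (n : ℂ) else 0)) := by
    rw [Matrix.fromBlocks_multiply, Matrix.fromBlocks_multiply]
    simp only [Matrix.mul_zero, Matrix.zero_mul, add_zero, zero_add, circ_mul hψ, offd_mul hψ]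
  have h2 := congrArg Matrix.det h
  rw [Matrix.det_mul, Matrix.det_mul, Matrix.det_fromBlocks_zero₂₁, mul_comm] at h2
  exact mul_left_cancel₀ (mul_ne_zero (four_det_ne hψ) (four_det_ne hψ)) h2

lemma ite_or_split {n : ℕ} (s i j : ZMod n) (hs : s + s ≠ 0) :
    (if i ≠ j ∧ (j = i + s ∨ i = j + s) then (1 : ℂ) else 0) =
      (if j = i + s then 1 else 0) + (if j = i - s then 1 else 0) := by
  have hs0 : s ≠ 0 := by rintro rfl; simp at hs
  by_cases h1 : j = i + s
  · have h2 : ¬ j = i - s := by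
      intro h2
      apply hs
      have : i + s = i - s := h1.symm.trans h2
      linear_combination this
    have h3 : i ≠ j := by
      intro h3; apply hs0; rw [← h3] at h1; simpa using h1
    rw [if_pos ⟨h3, Or.inl h1⟩, if_pos h1, if_neg h2, add_zero]
  · by_cases h2 : j = i - s
    · have h3 : i ≠ j := by
        intro h3; apply hs0; rw [← h3] at h2; linear_combination h2
      have h4 : i = j + s := by rw [h2]; ring
      rw [if_pos ⟨h3, Or.inr h4⟩, if_neg h1, if_pos h2, zero_add]
    · have h4 : ¬ i = j + s := by
        intro h; apply h2; rw [h]; ring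
      rw [if_neg (by rintro ⟨_, h | h⟩ <;> contradiction), if_neg h1, if_neg h2, add_zero]

lemma lap_eq (hn : 9 ≤ n) :
    (genPetersen n 4).lapMatrix ℂ + (Matrix.of fun _ _ => 1) =
      Matrix.fromBlocks (circ n 1) (offd n) (offd n) (circ n 4) := by
  have hm : ∀ m : ℕ, 0 < m → m < 9 → (m : ZMod n) ≠ 0 := by
    intro m h0 h9 h
    rw [ZMod.natCast_eq_zero_iff] at h
    have := Nat.le_of_dvd h0 h
    omega
  have h2 : (1 : ZMod n) + 1 ≠ 0 := by
    have := hm 2 (by norm_num) (by norm_num)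
    push_cast at this
    intro h; apply this; linear_combination h
  have h8 : (4 : ZMod n) + 4 ≠ 0 := by
    have := hm 8 (by norm_num) (by norm_num)
    push_cast at this
    intro h; apply this; linear_combination h
  have a11 : ∀ i j, (if (genPetersen n 4).Adj (Sum.inl i) (Sum.inl j) then (1 : ℂ) else 0) =
      (if j = i + 1 then 1 else 0) + (if j = i - 1 then 1 else 0) := by
    intro i j
    rw [← ite_or_split 1 i j h2]
    congr 1
    simp [genPetersen, gpRel]
  have a22 : ∀ i j, (if (genPetersen n 4).Adj (Sum.inr i) (Sum.inr j) then (1 : ℂ) else 0) =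
      (if j = i + 4 then 1 else 0) + (if j = i - 4 then 1 else 0) := by
    intro i j
    rw [← ite_or_split 4 i j h8]
    congr 1
    simp [genPetersen, gpRel]
  have a12 : ∀ i j, (if (genPetersen n 4).Adj (Sum.inl i) (Sum.inr j) then (1 : ℂ) else 0) =
      (if j = i then 1 else 0) := by
    intro i j
    congr 1
    simp [genPetersen, gpRel]
  have a21 : ∀ i j, (if (genPetersen n 4).Adj (Sum.inr i) (Sum.inl j) then (1 : ℂ) else 0) =
      (if j = i then 1 else 0) := by
    intro i j
    congr 1
    simp [genPetersen, gpRel, eq_comm]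
  have hdeg : ∀ x, ((genPetersen n 4).degree x : ℂ) = 3 := by
    intro x
    rw [SimpleGraph.degree_eq_sum_if_adj, Fintype.sum_sum_type]
    rcases x with i | i
    · simp only [a11, a12, Finset.sum_add_distrib, Finset.sum_ite_eq', Finset.mem_univ, if_true]
      norm_num
    · simp only [a21, a22, Finset.sum_add_distrib, Finset.sum_ite_eq', Finset.mem_univ, if_true]
      norm_num
  ext x y
  simp only [SimpleGraph.lapMatrix, SimpleGraph.degMatrix, Matrix.add_apply, Matrix.sub_apply,
    Matrix.diagonal_apply, SimpleGraph.adjMatrix_apply, Matrix.of_apply, hdeg]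
  rcases x with i | i <;> rcases y with j | j
  · simp only [a11, Matrix.fromBlocks_apply₁₁, circ, Matrix.of_apply, Sum.inl.injEq, eq_comm (a := i) (b := j)]
    ring
  · simp [a12, offd]; ring
  · simp [a21, offd]; ring
  · simp only [a22, Matrix.fromBlocks_apply₂₂, circ, Matrix.of_apply, Sum.inr.injEq, eq_comm (a := i) (b := j)]
    ring

end Fourier

section Products

lemma prod_zmod {n : ℕ} [NeZero n] (g : ℕ → ℂ) :
    ∏ k : ZMod n, g k.val = ∏ i ∈ Finset.range n, g i := by
  obtain _ | m := n
  · exact absurd rfl (NeZero.ne 0)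
  · exact Fin.prod_univ_eq_prod_range g (m + 1)

lemma T_eval_half (z : ℂ) (hz : z ≠ 0) (n : ℕ) :
    (Polynomial.Chebyshev.T ℂ n).eval ((z + z⁻¹) / 2) = (z ^ n + (z⁻¹) ^ n) / 2 := by
  induction n using Nat.twoStepInduction with
  | zero => simp
  | one => simp
  | more n h0 h1 =>
    have : ((n + 2 : ℕ) : ℤ) = (n : ℤ) + 2 := by push_cast; ring
    rw [this, Polynomial.Chebyshev.T_add_two]
    push_cast at h0 h1
    simp only [Polynomial.eval_sub, Polynomial.eval_mul, Polynomial.eval_X, Polynomial.eval_ofNat,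
      h0, h1]
    have hzi : z * z⁻¹ = 1 := mul_inv_cancel₀ hz
    rw [pow_succ z n, pow_succ z⁻¹ n, pow_add z n 2, pow_add z⁻¹ n 2]
    linear_combination (z ^ n + z⁻¹ ^ n) / 2 * hzi

variable {n : ℕ} [NeZero n] {ζ : ℂ}

lemma prod_sub_char (hζ : IsPrimitiveRoot ζ n) (z : ℂ) :
    ∏ k : ZMod n, (z - AddChar.zmodChar n hζ.pow_eq_one k) = z ^ n - 1 := by
  have hpos : 0 < n := Nat.pos_of_ne_zero (NeZero.ne n)
  have h := hζ.pow_sub_pow_eq_prod_sub_mul z 1 hpos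
  rw [one_pow] at h
  rw [h]
  simp only [AddChar.zmodChar_apply, mul_one]
  rw [prod_zmod (fun i => z - ζ ^ i)]
  refine Finset.prod_bij (fun i _ => ζ ^ i) ?_ ?_ ?_ ?_
  · intro i _
    rw [Polynomial.mem_nthRootsFinset hpos, ← pow_mul, mul_comm, pow_mul, hζ.pow_eq_one, one_pow]
  · intro i hi j hj hij
    exact hζ.pow_inj (Finset.mem_range.mp hi) (Finset.mem_range.mp hj) hij
  · intro x hx
    rw [Polynomial.mem_nthRootsFinset hpos] at hx
    obtain ⟨i, hi, h⟩ := hζ.eq_pow_of_pow_eq_one hx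
    exact ⟨i, Finset.mem_range.mpr hi, h⟩
  · intro i _
    rfl

lemma prod_one_sub_char (hζ : IsPrimitiveRoot ζ n) :
    ∏ k ∈ Finset.univ.erase (0 : ZMod n), (1 - AddChar.zmodChar n hζ.pow_eq_one k) = n := by
  have h1 : ∏ k ∈ Finset.univ.erase (0 : ZMod n), (1 - AddChar.zmodChar n hζ.pow_eq_one k) =
      ∏ k : ZMod n, (fun i : ℕ => if i = 0 then 1 else 1 - ζ ^ i) k.val := by
    rw [← Finset.mul_prod_erase _ _ (Finset.mem_univ (0 : ZMod n))]
    simp only [ZMod.val_zero, if_true, one_mul]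
    refine Finset.prod_congr rfl fun k hk => ?_
    have : k.val ≠ 0 := by
      rw [Ne, ZMod.val_eq_zero]; exact (Finset.mem_erase.mp hk).1
    rw [if_neg this, AddChar.zmodChar_apply]
  rw [h1, prod_zmod (fun i : ℕ => if i = 0 then 1 else 1 - ζ ^ i)]
  obtain ⟨m, rfl⟩ := Nat.exists_eq_succ_of_ne_zero (NeZero.ne n)
  rw [Finset.prod_range_succ']
  simp only [Nat.succ_ne_zero, if_false, if_true, mul_one]
  have := hζ.prod_one_sub_pow_eq_order
  rw [Nat.cast_succ, ← this]

/-- cosine values -/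
noncomputable def cosv (ψ : AddChar (ZMod n) ℂ) (k : ZMod n) : ℂ := (ψ k + ψ (-k)) / 2

lemma char_mul_neg (ψ : AddChar (ZMod n) ℂ) (k : ZMod n) : ψ k * ψ (-k) = 1 := by
  rw [← AddChar.map_add_eq_mul, add_neg_cancel, AddChar.map_zero_eq_one]

lemma prod_cos (hζ : IsPrimitiveRoot ζ n) (x : ℂ) :
    ∏ k : ZMod n, (2 * (x - cosv (AddChar.zmodChar n hζ.pow_eq_one) k)) =
      2 * ((Polynomial.Chebyshev.T ℂ n).eval x - 1) := by
  set ψ := AddChar.zmodChar n hζ.pow_eq_one with hψ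
  obtain ⟨s, hs⟩ := IsAlgClosed.exists_pow_nat_eq (x ^ 2 - 1) (n := 2) (by norm_num)
  have hz1 : (x + s) * (x - s) = 1 := by linear_combination -hs
  set z := x + s with hzdef
  have hz : z ≠ 0 := by
    intro h; rw [h, zero_mul] at hz1; exact zero_ne_one hz1
  have hzi : z⁻¹ = x - s := inv_eq_of_mul_eq_one_right hz1
  have hx : x = (z + z⁻¹) / 2 := by rw [hzi, hzdef]; ring
  have hfac : ∀ k, 2 * (x - cosv ψ k) = (z - ψ k) * (z - ψ (-k)) * z⁻¹ := by
    intro k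
    have h1 := char_mul_neg ψ k
    have h2 : z * z⁻¹ = 1 := mul_inv_cancel₀ hz
    rw [hx, cosv]
    linear_combination (-z⁻¹) * h1 + (-z + ψ k + ψ (-k)) * h2
  have hneg : ∏ k : ZMod n, (z - ψ (-k)) = z ^ n - 1 := by
    rw [← prod_sub_char hζ z]
    exact Fintype.prod_equiv (Equiv.neg _) _ _ fun k => rfl
  simp only [hfac, Finset.prod_mul_distrib, hneg, hψ ▸ prod_sub_char hζ z]
  rw [Finset.prod_const, Finset.card_univ, ZMod.card]
  conv_rhs => rw [hx, T_eval_half z hz]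
  have h3 : z ^ n * z⁻¹ ^ n = 1 := by rw [← mul_pow, mul_inv_cancel₀ hz, one_pow]
  linear_combination (z ^ n - 2) * h3

lemma prod_cos_one (hζ : IsPrimitiveRoot ζ n) :
    ∏ k ∈ Finset.univ.erase (0 : ZMod n),
      (2 * (1 - cosv (AddChar.zmodChar n hζ.pow_eq_one) k)) = (n : ℂ) ^ 2 := by
  set ψ := AddChar.zmodChar n hζ.pow_eq_one with hψ
  have hfac : ∀ k, 2 * (1 - cosv ψ k) = (1 - ψ k) * (1 - ψ (-k)) := by
    intro k
    have h1 := char_mul_neg ψ k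
    rw [cosv]
    linear_combination -h1
  have h1 : ∏ k ∈ Finset.univ.erase (0 : ZMod n), (1 - ψ k) = n := prod_one_sub_char hζ
  have h2 : ∏ k ∈ Finset.univ.erase (0 : ZMod n), (1 - ψ (-k)) = n := by
    rw [← h1]
    refine Finset.prod_equiv (Equiv.neg _) ?_ ?_
    · intro i; simp
    · intro i _; rfl
  simp only [hfac, Finset.prod_mul_distrib, h1, h2]
  ring

lemma prod_cos_ne (hζ : IsPrimitiveRoot ζ n) (x : ℂ) (hx : x ≠ 1) :
    ∏ k ∈ Finset.univ.erase (0 : ZMod n),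
      (2 * (x - cosv (AddChar.zmodChar n hζ.pow_eq_one) k)) =
      ((Polynomial.Chebyshev.T ℂ n).eval x - 1) / (x - 1) := by
  have h := prod_cos hζ x
  rw [← Finset.mul_prod_erase _ _ (Finset.mem_univ (0 : ZMod n))] at h
  have h0 : cosv (AddChar.zmodChar n hζ.pow_eq_one) 0 = 1 := by simp [cosv]
  rw [h0] at h
  rw [eq_div_iff (sub_ne_zero.mpr hx)]
  linear_combination h / 2

end Products

/-- If `w_1, w_2, w_3, w_4` are the roots (with multiplicity) of
`16X⁴ − 8X³ − 24X² − 1`, then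
`τ(GP(n,4)) = (−1)^{n−1}·n·∏_{s=1}^{4}(T_n(w_s) − 1)/(w_s − 1)`. -/
theorem spanning_trees_GP4 (n : ℕ) (hn : 9 ≤ n) (w : Fin 4 → ℂ)
    (hw : (C (16 : ℂ)) * X ^ 4 - C 8 * X ^ 3 - C 24 * X ^ 2 - C 1 =
      C (16 : ℂ) * ∏ s : Fin 4, (X - C (w s))) :
    (numSpanningTrees (genPetersen n 4) : ℂ) =
      (-1) ^ (n - 1) * n * ∏ s : Fin 4,
        ((Polynomial.Chebyshev.T ℂ n).eval (w s) - 1) / (w s - 1) := by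
  have hn0 : n ≠ 0 := by omega
  have : NeZero n := ⟨hn0⟩
  have hnC : (n : ℂ) ≠ 0 := Nat.cast_ne_zero.mpr hn0
  have hζ := Complex.isPrimitiveRoot_exp n hn0
  set ζ := Complex.exp (2 * Real.pi * Complex.I / n) with hζdef
  have hprim := AddChar.zmodChar_primitive_of_primitive_root n hζ
  have hP : ∀ x : ℂ, 16 * x ^ 4 - 8 * x ^ 3 - 24 * x ^ 2 - 1 = ∏ s : Fin 4, (2 * (w s - x)) := by
    intro x
    have := congrArg (Polynomial.eval x) hw
    simp only [Polynomial.eval_sub, Polynomial.eval_mul, Polynomial.eval_pow, Polynomial.eval_X,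
      Polynomial.eval_C, Polynomial.eval_prod] at this
    rw [this]
    simp only [Fin.prod_univ_four]
    ring
  have hw1 : ∀ s, w s ≠ 1 := by
    intro s hs
    have h1 := hP 1
    rw [Finset.prod_eq_zero (Finset.mem_univ s) (by rw [hs]; ring)] at h1
    norm_num at h1
  have hdet := det_lap_add_ones (genPetersen n 4) (Sum.inl 0)
  rw [lap_eq hn, det_blocks hprim] at hdet
  set ψ := AddChar.zmodChar n hζ.pow_eq_one with hψ
  rw [← Finset.mul_prod_erase _ _ (Finset.mem_univ (0 : ZMod n))] at hdet
  have hfac : ∀ k ∈ Finset.univ.erase (0 : ZMod n),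
      ((3 - ψ (1 * k) - ψ (-(1 * k)) + if k = 0 then (n : ℂ) else 0) *
      (3 - ψ (4 * k) - ψ (-(4 * k)) + if k = 0 then (n : ℂ) else 0) -
      (-1 + if k = 0 then (n : ℂ) else 0) * (-1 + if k = 0 then (n : ℂ) else 0)) =
      (-1) * (2 * (1 - cosv ψ k)) * ∏ s : Fin 4, (2 * (w s - cosv ψ k)) := by
    intro k hk
    have hk0 := (Finset.mem_erase.mp hk).1
    rw [← hP]
    simp only [if_neg hk0, cosv, one_mul, add_zero]
    have h4 : ψ (4 * k) = ψ k ^ 4 := by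
      rw [← AddChar.map_nsmul_eq_pow]; simp
    have h4' : ψ (-(4 * k)) = ψ (-k) ^ 4 := by
      rw [← AddChar.map_nsmul_eq_pow]; simp
    rw [h4, h4']
    have h1 := char_mul_neg ψ k
    set u := ψ k
    set v := ψ (-k)
    have hT : u ^ 4 + v ^ 4 = (u + v) ^ 4 - 4 * (u + v) ^ 2 + 2 := by
      linear_combination (-4 * (u ^ 2 + v ^ 2) - 6 * (u * v + 1) + 8) * h1
    linear_combination (-(3 - u - v)) * hT
  rw [Finset.prod_congr rfl hfac, Finset.prod_mul_distrib, Finset.prod_mul_distrib,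
    Finset.prod_comm, prod_cos_one hζ, Finset.prod_const,
    Finset.card_erase_of_mem (Finset.mem_univ _), Finset.card_univ, ZMod.card,
    Finset.prod_congr rfl (fun s _ => prod_cos_ne hζ (w s) (hw1 s))] at hdet
  simp only [mul_zero, neg_zero, AddChar.map_zero_eq_one, if_true, Fintype.card_sum, ZMod.card] at hdet
  push_cast at hdet
  have h4n : (4 * (n : ℂ) ^ 2) ≠ 0 := mul_ne_zero (by norm_num) (pow_ne_zero _ hnC)
  apply mul_left_cancel₀ h4n
  linear_combination -hdet
end
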